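/- arXiv:2402.09647 — 2 statements merged into one kernel-verified Lean document; each statement's English description precedes it below -/
import Mathlib

section
/- Let α, ρ ∈ ℝ with 0 < ρ < 1/4 and such that α is not a linear combination of 1 and ρ with rational coefficients, and let g : ℤ → ℤ be given by g(n) = 1 if ‖α·n²‖ < ρ and g(n) = 0 otherwise. Then the first-order theory of the structure (ℤ; <, +, g) is undecidable; that is, the set of sentences of the first-order language with one binary relation symbol <, one binary function symbol +, and one unary function symbol g that are true in ℤ (with the standard order and addition, and g interpreted as above) is not a computable set of sentences (under an effective encoding of sentences). -/
/-!
STATEMENT 2: Let α, ρ ∈ ℝ with 0 < ρ < 1/4 and α not a rational linear combination of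
1 and ρ, and g : ℤ → ℤ given by g(n) = 1 if ‖α·n²‖ < ρ and 0 otherwise, where
‖x‖ = |x - round x| is the distance to the nearest integer. Then the first-order theory
of (ℤ; <, +, g) is undecidable.
-/

open FirstOrder Language

namespace Stmt2

/-- The language with one binary relation `<`, one binary function `+`,
and one unary function `g`. -/
def L : Language :=
  ⟨fun n => match n with | 1 => Unit | 2 => Unit | _ => Empty,
   fun n => match n with | 2 => Unit | _ => Empty⟩

instance instEncF : (n : ℕ) → Encodable (L.Functions n)
  | 0 => inferInstanceAs (Encodable Empty)
  | 1 => inferInstanceAs (Encodable Unit)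
  | 2 => inferInstanceAs (Encodable Unit)
  | (_ + 3) => inferInstanceAs (Encodable Empty)

instance instEncR : (n : ℕ) → Encodable (L.Relations n)
  | 0 => inferInstanceAs (Encodable Empty)
  | 1 => inferInstanceAs (Encodable Empty)
  | 2 => inferInstanceAs (Encodable Unit)
  | (_ + 3) => inferInstanceAs (Encodable Empty)

/-- Partial inverse to `BoundedFormula.listEncode` on sentences. -/
def decodeSentence
    (l : List ((Σ k, L.Term (Empty ⊕ Fin k)) ⊕ ((Σ n, L.Relations n) ⊕ ℕ))) :
    Option L.Sentence :=
  (BoundedFormula.listDecode l)[0]?.bind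
    (fun x => if h : x.1 = 0 then
      some (cast (congrArg (L.BoundedFormula Empty) h) x.2) else none)

/-- An effective encoding of sentences (via their encodings as lists of symbols). -/
instance instEncSentence : Encodable L.Sentence :=
  Encodable.ofLeftInjection
    (fun φ => BoundedFormula.listEncode φ)
    decodeSentence
    (fun φ => by
      have h := BoundedFormula.listDecode_encode_list (L := L) (α := Empty) [⟨0, φ⟩]
      rw [List.flatMap_singleton] at h
      have h' : BoundedFormula.listDecode (BoundedFormula.listEncode φ) =
          [⟨0, φ⟩] := h
      simp [decodeSentence, h'])

/-- The structure on ℤ interpreting `<`, `+` and `g`. -/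
def S (g : ℤ → ℤ) : L.Structure ℤ where
  funMap {n} f x :=
    match n, f with
    | 1, _ => g (x 0)
    | 2, _ => x 0 + x 1
  RelMap {n} r x :=
    match n, r with
    | 2, _ => x 0 < x 1

/-- The first-order theory of (ℤ; <, +, g), as a set of codes of sentences. -/
def theoryCodes (g : ℤ → ℤ) : Set ℕ :=
  {c | ∃ φ : L.Sentence, Encodable.encode φ = c ∧ @Sentence.Realize L ℤ (S g) φ}

/-!
Let `a` be the class of `α` in `ℝ/ℤ` and `G = {n | ‖n² a‖ < ρ}`. Since
`(r + i)² a - (r - i)² a = 4 i r a`, a point `r` about which `G` is symmetric on a long interval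
has `4 r a` close to `0`, whereas density of quadratic orbits leaves `r² a` essentially free. So
for fixed `u` and `v` some such `r` have `r + u, r + v ∈ G` exactly if `‖u² a - v² a‖ < 2 ρ`, up to
the boundary case, and `u = 2 (h + k)`, `v = 2 (h - k)` turn this into `‖16 h k a‖ < 2 ρ`. Its
almost periods in `h` are the `n` with `16 n k a` close to `0`, and all almost periods for `k` are
almost periods for `k'` precisely when `k ∣ k'`. Divisibility is therefore definable; together with
addition it defines multiplication, hence all partial recursive functions, and the halting problem
reduces to the theory.
-/

open Filter Set
open scoped Topology

section Recurrence

theorem exists_forall_mem_Icc_of_isCompact {X : Type*} [TopologicalSpace X] {C : Set X}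
    (hC : IsCompact C) {U : ℤ → Set X} (hU : ∀ i, IsOpen (U i)) (hCU : C ⊆ ⋃ i, U i) :
    ∃ N : ℤ, ∀ z ∈ C, ∃ i ∈ Icc (-N) N, z ∈ U i := by
  obtain ⟨t, ht⟩ := hC.elim_finite_subcover U hU hCU
  refine ⟨∑ i ∈ t, |i|, fun z hz => ?_⟩
  obtain ⟨i, hi, hzi⟩ := mem_iUnion₂.1 (ht hz)
  exact ⟨i, abs_le.1 (Finset.single_le_sum (fun j _ => abs_nonneg j) hi), hzi⟩

variable {A : Type*} [AddCommGroup A] [TopologicalSpace A] [IsTopologicalAddGroup A]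
  [CompactSpace A]

theorem exists_zsmul_mem_of_mem_Icc (θ : A) {U : Set A} (hU : U ∈ 𝓝 0) :
    ∃ N : ℤ, ∀ n : ℤ, ∃ m ∈ Icc (n - N) (n + N), m • θ ∈ U := by
  have hcover : closure (range fun n : ℤ => n • θ) ⊆ ⋃ i : ℤ, {z | z - i • θ ∈ interior U} := by
    intro z hz
    have hopen : IsOpen {w | z - w ∈ interior U} := isOpen_interior.preimage (by fun_prop)
    obtain ⟨_, hi, i, rfl⟩ := mem_closure_iff.1 hz _ hopen (by
      simpa only [mem_ofPred_eq, sub_self] using mem_interior_iff_mem_nhds.2 hU)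
    exact mem_iUnion.2 ⟨i, hi⟩
  obtain ⟨N, hN⟩ := exists_forall_mem_Icc_of_isCompact isClosed_closure.isCompact
    (fun i => isOpen_interior.preimage (by fun_prop)) hcover
  refine ⟨N, fun n => ?_⟩
  obtain ⟨i, ⟨hi, hi'⟩, hU⟩ := hN _ (subset_closure ⟨n, rfl⟩)
  exact ⟨n - i, ⟨by linarith, by linarith⟩, by simpa only [sub_smul] using interior_subset hU⟩

end Recurrence

section QuadraticOrbit

variable {A B : Type*} [AddCommGroup A] [TopologicalSpace A] [AddCommGroup B] [TopologicalSpace B]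

/-- The orbit of the origin under the skew product `(u, s) ↦ (u + θ, s + 2 π(u) + π(θ))`. -/
def quadraticOrbit (π : A →ₜ+ B) (θ : A) (n : ℤ) : A × B :=
  (n • θ, n ^ 2 • π θ)

variable [IsTopologicalAddGroup A] [IsTopologicalAddGroup B] {π : A →ₜ+ B} {θ : A}

theorem add_mem_closure_range_quadraticOrbit {z : A × B} {w : B}
    (hz : z ∈ closure (range (quadraticOrbit π θ)))
    (hw : (0, w) ∈ closure (range (quadraticOrbit π θ))) :
    z + (0, w) ∈ closure (range (quadraticOrbit π θ)) := by
  have horbit (p : ℤ) : quadraticOrbit π θ p + (0, w) ∈ closure (range (quadraticOrbit π θ)) := by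
    have hf : Continuous fun u : A × B => quadraticOrbit π θ p + (u.1, u.2 + (2 * p) • π u.1) := by
      fun_prop
    have hmaps : MapsTo (fun u : A × B => quadraticOrbit π θ p + (u.1, u.2 + (2 * p) • π u.1))
        (range (quadraticOrbit π θ)) (range (quadraticOrbit π θ)) := by
      refine mapsTo_range_iff.2 fun q => ⟨p + q, ?_⟩
      simp only [quadraticOrbit, map_zsmul, Prod.mk_add_mk]
      exact congrArg₂ Prod.mk (by module) (by module)
    simpa only [map_zero, smul_zero, add_zero] using map_mem_closure hf hw hmaps
  rw [← closure_closure]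
  exact map_mem_closure (f := (· + (0, w))) (by fun_prop) hz (mapsTo_range_iff.2 horbit)

variable (π θ) in
/-- The fibre over `0` of the closure of the quadratic orbit. -/
def quadraticFiber [CompactSpace B] : AddSubgroup B where
  carrier := {w | (0, w) ∈ closure (range (quadraticOrbit π θ))}
  zero_mem' := subset_closure ⟨0, by simp [quadraticOrbit]⟩
  add_mem' h₁ h₂ := by
    simpa only [mem_ofPred_eq, Prod.mk_add_mk, add_zero] using
      add_mem_closure_range_quadraticOrbit h₁ h₂
  neg_mem' {w} hw := by
    have hmul (n : ℕ) : (0, n • w) ∈ closure (range (quadraticOrbit π θ)) := by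
      induction n with
      | zero => exact subset_closure ⟨0, by simp [quadraticOrbit]⟩
      | succ n ih =>
        simpa only [succ_nsmul, Prod.mk_add_mk, add_zero] using
          add_mem_closure_range_quadraticOrbit ih hw
    have hneg : -w ∈ closure (range fun n : ℕ => n • w) := by
      rw [← closure_range_zsmul_eq_nsmul]
      exact subset_closure ⟨-1, by simp⟩
    rw [mem_ofPred_eq, ← closure_closure]
    exact map_mem_closure (f := fun s : B => ((0 : A), s)) (by fun_prop) hneg
      (mapsTo_range_iff.2 hmul)

end QuadraticOrbit

theorem exists_coe_eq_and_abs_eq_norm (x : UnitAddCircle) :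
    ∃ t : ℝ, (t : UnitAddCircle) = x ∧ |t| = ‖x‖ := by
  induction x using QuotientAddGroup.induction_on with
  | H t =>
    have hround : ((round t : ℝ) : UnitAddCircle) = 0 :=
      (AddCircle.coe_eq_zero_iff (p := (1 : ℝ))).2 ⟨round t, by simp⟩
    exact ⟨t - round t, by rw [AddCircle.coe_sub, hround, sub_zero], UnitAddCircle.norm_eq.symm⟩

theorem norm_coe_le_abs (t : ℝ) : ‖(t : UnitAddCircle)‖ ≤ |t| :=
  QuotientAddGroup.norm_mk_le_norm

theorem exists_norm_lt_and_norm_add_lt {ρ : ℝ} {b c : UnitAddCircle} (h : ‖b - c‖ < 2 * ρ) :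
    ∃ x : UnitAddCircle, ‖x + b‖ < ρ ∧ ‖x + c‖ < ρ := by
  obtain ⟨d, hd, hd'⟩ := exists_coe_eq_and_abs_eq_norm (b - c)
  have hhalf : ‖((d / 2 : ℝ) : UnitAddCircle)‖ < ρ := by
    refine (norm_coe_le_abs _).trans_lt ?_
    rw [abs_div, abs_two]
    linarith
  have hsum : ((d / 2 : ℝ) : UnitAddCircle) + (d / 2 : ℝ) = b - c := by
    rw [← AddCircle.coe_add, add_halves, hd]
  refine ⟨(d / 2 : ℝ) - b, by rwa [sub_add_cancel], ?_⟩
  rwa [show ((d / 2 : ℝ) : UnitAddCircle) - b + c = -(d / 2 : ℝ) by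
    rw [eq_neg_iff_add_eq_zero, add_right_comm, ← add_sub_right_comm, hsum]; abel, norm_neg]

theorem lt_norm_coe {σ t : ℝ} (h : σ < t) (h' : t < 1 - σ) : σ < ‖(t : UnitAddCircle)‖ := by
  rw [UnitAddCircle.norm_eq]
  rcases le_or_gt (round t) 0 with hr | hr
  · have : (round t : ℝ) ≤ 0 := by exact_mod_cast hr
    exact lt_of_lt_of_le (by linarith) (le_abs_self _)
  · have : (1 : ℝ) ≤ round t := by exact_mod_cast hr
    exact lt_of_lt_of_le (by linarith) (neg_le_abs _)

theorem exists_notMem_and_norm_add_lt {ρ : ℝ} {b c : UnitAddCircle} (h : ‖b - c‖ < 2 * ρ)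
    {F : Set UnitAddCircle} (hF : F.Finite) :
    ∃ x ∉ F, ‖x + b‖ < ρ ∧ ‖x + c‖ < ρ := by
  have hopen : IsOpen {x : UnitAddCircle | ‖x + b‖ < ρ ∧ ‖x + c‖ < ρ} :=
    (isOpen_lt (by fun_prop) (by fun_prop)).and (isOpen_lt (by fun_prop) (by fun_prop))
  have : Nontrivial UnitAddCircle := nontrivial_of_ne ((1 / 2 : ℝ) : UnitAddCircle) 0
    (norm_pos_iff.1 (lt_norm_coe (by norm_num) (by norm_num)))
  obtain ⟨x, hx, -, hxF⟩ := (dense_univ.sdiff_finite hF).inter_open_nonempty _ hopen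
    (exists_norm_lt_and_norm_add_lt h)
  exact ⟨x, hxF, hx⟩

theorem exists_norm_lt_and_lt_norm_add {σ : ℝ} (hσ0 : 0 < σ) (hσ : σ < 1 / 2) {z : UnitAddCircle}
    (hz : z ≠ 0) : ∃ p : UnitAddCircle, ‖p‖ < σ ∧ σ < ‖p + z‖ := by
  have hpos {t : ℝ} (ht0 : 0 < t) (ht : t ≤ 1 / 2) :
      ∃ p : UnitAddCircle, ‖p‖ < σ ∧ σ < ‖p + t‖ := by
    obtain ⟨η, hη, hη'⟩ : ∃ η, max 0 (t - (1 - 2 * σ)) < η ∧ η < min t (2 * σ) := by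
      refine exists_between (max_lt (lt_min ht0 ?_) (lt_min ?_ ?_)) <;> linarith
    rw [max_lt_iff] at hη
    rw [lt_min_iff] at hη'
    refine ⟨(σ - η : ℝ), (norm_coe_le_abs _).trans_lt (abs_lt.2 ⟨?_, ?_⟩), ?_⟩
    · linarith
    · linarith
    · rw [← AddCircle.coe_add]
      exact lt_norm_coe (by linarith) (by linarith)
  obtain ⟨t, rfl, ht⟩ := exists_coe_eq_and_abs_eq_norm z
  have ht' : |t| ≤ 1 / 2 := by
    simpa [ht] using AddCircle.norm_le_half_period (p := (1 : ℝ)) (x := t) one_ne_zero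
  rcases lt_trichotomy t 0 with h | rfl | h
  · obtain ⟨p, hp, hp'⟩ := hpos (neg_pos.2 h) (abs_of_neg h ▸ ht')
    refine ⟨-p, by rwa [norm_neg], ?_⟩
    rwa [← norm_neg, neg_add, neg_neg, ← AddCircle.coe_neg]
  · exact (hz (AddCircle.coe_zero _)).elim
  · exact hpos h (abs_of_pos h ▸ ht')

theorem finite_setOf_norm_eq (σ : ℝ) : {z : UnitAddCircle | ‖z‖ = σ}.Finite := by
  refine (toFinite {(σ : UnitAddCircle), -(σ : UnitAddCircle)}).subset fun z (hz : ‖z‖ = σ) => ?_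
  obtain ⟨t, rfl, ht⟩ := exists_coe_eq_and_abs_eq_norm z
  rcases eq_or_eq_neg_of_abs_eq (ht.trans hz) with rfl | rfl
  · exact mem_insert _ _
  · exact Or.inr (AddCircle.coe_neg _)

theorem eventually_norm_zsmul_ne {a : UnitAddCircle} (ha : ¬ IsOfFinAddOrder a) (σ : ℝ) :
    ∀ᶠ n : ℤ in cofinite, ‖n • a‖ ≠ σ := by
  simp only [eventually_cofinite, not_not]
  exact (finite_setOf_norm_eq σ).preimage (injective_zsmul_iff_not_isOfFinAddOrder.2 ha).injOn

theorem eventually_norm_lt_iff {ι : Type*} {l : Filter ι} {f : ι → UnitAddCircle}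
    {z : UnitAddCircle} {σ : ℝ} (hf : Tendsto f l (𝓝 z)) (hz : ‖z‖ ≠ σ) :
    ∀ᶠ i in l, (‖f i‖ < σ ↔ ‖z‖ < σ) := by
  rcases hz.lt_or_gt with h | h
  · filter_upwards [hf.norm.eventually_lt_const h] with i hi
    exact iff_of_true hi h
  · filter_upwards [hf.norm.eventually_const_lt h] with i hi
    exact iff_of_false hi.not_gt h.not_gt

theorem denseRange_zsmul_of_not_isOfFinAddOrder {a : UnitAddCircle} (ha : ¬ IsOfFinAddOrder a) :
    DenseRange fun n : ℤ => n • a :=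
  AddCircle.denseRange_zsmul_iff.2 (addOrderOf_eq_zero_iff.2 ha)

theorem comap_nhds_neBot_of_mem_closure_range {X ι : Type*} [TopologicalSpace X] {f : ι → X}
    {x : X} (h : x ∈ closure (range f)) : (comap f (𝓝 x)).NeBot :=
  comap_neBot_iff_frequently.2 (mem_closure_iff_frequently.1 h)

section QuadraticDensity

variable {A : Type*} [AddCommGroup A] [TopologicalSpace A] [IsTopologicalAddGroup A]
  [CompactSpace A] {π : A →ₜ+ UnitAddCircle} {θ : A}

theorem exists_ne_zero_zsmul_mem (θ : A) {U : Set A} (hU : U ∈ 𝓝 0) :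
    ∃ p : ℤ, p ≠ 0 ∧ p • θ ∈ U := by
  obtain ⟨p, hpU, hp⟩ := (((mapClusterPt_zero_atTop_nsmul θ).frequently hU).and_eventually
    (eventually_ne_atTop 0)).exists
  exact ⟨p, Nat.cast_ne_zero.2 hp, by rwa [natCast_zsmul]⟩

-- A return time `p` of `θ` to `U` can be chosen so that the step `2p • π(θ)` of the progression
-- `q ↦ (2pq) • π(θ)` is small compared with the gaps between the return times `q`.
theorem exists_zsmul_mem_and_norm_bilinear_sub_lt (hθ : ¬ IsOfFinAddOrder (π θ))
    (x : UnitAddCircle) {U : Set A} (hU : U ∈ 𝓝 0) {ε : ℝ} (hε : 0 < ε) :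
    ∃ p q : ℤ, p • θ ∈ U ∧ q • θ ∈ U ∧ ‖(2 * p * q) • π θ - x‖ < ε := by
  obtain ⟨N, hN⟩ := exists_zsmul_mem_of_mem_Icc θ hU
  have hsmall : ∀ᶠ u in 𝓝 (0 : A), ‖π u‖ * (2 * N + 1) < ε := by
    have : Tendsto (fun u : A => ‖π u‖ * (2 * N + 1)) (𝓝 0) (𝓝 0) :=
      Continuous.tendsto' (by fun_prop) _ _ (by simp)
    exact this.eventually_lt_const hε
  obtain ⟨p, hp0, hpU, hp⟩ := exists_ne_zero_zsmul_mem θ (inter_mem hU hsmall)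
  obtain ⟨τ, hτ, hτp⟩ := exists_coe_eq_and_abs_eq_norm (π (p • θ))
  obtain ⟨s, rfl, -⟩ := exists_coe_eq_and_abs_eq_norm x
  have hτ0 : τ ≠ 0 := by
    rintro rfl
    rw [AddCircle.coe_zero, map_zsmul] at hτ
    exact hθ (isOfFinAddOrder_iff_zsmul_eq_zero.2 ⟨p, hp0, hτ.symm⟩)
  obtain ⟨q, hq, hqU⟩ := hN (round (s / (2 * τ)))
  refine ⟨p, q, hpU, hqU, ?_⟩
  have hq' : |q - s / (2 * τ)| ≤ N + 1 / 2 := by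
    have h₁ : |(q : ℝ) - round (s / (2 * τ))| ≤ N := by
      exact_mod_cast abs_sub_le_iff.2 ⟨by linarith [hq.2], by linarith [hq.1]⟩
    have h₂ := abs_sub_round (s / (2 * τ))
    rw [abs_sub_comm] at h₂
    linarith [abs_sub_le (q : ℝ) (round (s / (2 * τ))) (s / (2 * τ))]
  calc ‖(2 * p * q) • π θ - (s : UnitAddCircle)‖
      = ‖((2 * τ * (q - s / (2 * τ)) : ℝ) : UnitAddCircle)‖ := by
        have hlift : 2 * τ * (q - s / (2 * τ)) = (2 * q) • τ - s := by
          rw [zsmul_eq_mul]; push_cast; field_simp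
        rw [hlift, AddCircle.coe_sub, AddCircle.coe_zsmul, hτ, map_zsmul, smul_smul]
        congr 3
        ring
    _ ≤ |2 * τ * (q - s / (2 * τ))| := norm_coe_le_abs _
    _ = ‖π (p • θ)‖ * (2 * |q - s / (2 * τ)|) := by
        rw [abs_mul, abs_mul, hτp, abs_two]; ring
    _ ≤ ‖π (p • θ)‖ * (2 * N + 1) := by
        gcongr
        linarith
    _ < ε := hp

theorem zero_mem_closure_range_bilinear (hθ : ¬ IsOfFinAddOrder (π θ)) (x : UnitAddCircle) :
    ((0, 0), x) ∈ closure (range fun n : ℤ × ℤ =>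
      ((n.1 • θ, n.2 • θ), (2 * n.1 * n.2) • π θ)) := by
  refine (mem_closure_iff_nhds_basis
    (((𝓝 0).basis_sets.prod_nhds (𝓝 0).basis_sets).prod_nhds Metric.nhds_basis_ball)).2 ?_
  rintro ⟨⟨U, V⟩, ε⟩ ⟨⟨hU, hV⟩, hε⟩
  obtain ⟨p, q, hp, hq, hpq⟩ :=
    exists_zsmul_mem_and_norm_bilinear_sub_lt hθ x (inter_mem hU hV) hε
  exact ⟨_, ⟨(p, q), rfl⟩, ⟨hp.1, hq.2⟩, mem_ball_iff_norm.2 hpq⟩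

-- Polarization: along times with `p • θ → 0`, `q • θ → 0` and `(2pq) • π(θ) → x`, the limits of
-- `p² • π(θ)`, `q² • π(θ)` and `(p + q)² • π(θ)` all lie in the fibre, and `x` is a combination
-- of them.
theorem quadraticFiber_eq_top (hθ : ¬ IsOfFinAddOrder (π θ)) : quadraticFiber π θ = ⊤ := by
  refine (AddSubgroup.eq_top_iff' _).2 fun x => ?_
  have := comap_nhds_neBot_of_mem_closure_range (zero_mem_closure_range_bilinear hθ x)
  let F := Ultrafilter.of (comap (fun n : ℤ × ℤ =>
    ((n.1 • θ, n.2 • θ), (2 * n.1 * n.2) • π θ)) (𝓝 ((0, 0), x)))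
  have hF : Tendsto _ (F : Filter (ℤ × ℤ)) _ := tendsto_comap.mono_left (Ultrafilter.of_le _)
  have hp : Tendsto (fun n : ℤ × ℤ => n.1 • θ) F (𝓝 0) := hF.fst_nhds.fst_nhds
  have hq : Tendsto (fun n : ℤ × ℤ => n.2 • θ) F (𝓝 0) := hF.fst_nhds.snd_nhds
  have hlim (f : ℤ × ℤ → UnitAddCircle) : ∃ w, Tendsto f F (𝓝 w) :=
    ⟨_, (F.map f).le_nhds_lim⟩
  have hmem {f : ℤ × ℤ → ℤ} {w : UnitAddCircle} (hf : Tendsto (fun n => f n • θ) F (𝓝 0))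
      (hw : Tendsto (fun n => f n ^ 2 • π θ) F (𝓝 w)) : w ∈ quadraticFiber π θ :=
    mem_closure_of_tendsto (hf.prodMk_nhds hw) (.of_forall fun n => ⟨f n, rfl⟩)
  obtain ⟨w₁, hw₁⟩ := hlim fun n => n.1 ^ 2 • π θ
  obtain ⟨w₂, hw₂⟩ := hlim fun n => n.2 ^ 2 • π θ
  have hsum : w₁ + w₂ + x ∈ quadraticFiber π θ := by
    refine hmem (f := fun n => n.1 + n.2) ?_ ?_
    · simpa only [add_smul, add_zero] using hp.add hq
    · refine ((hw₁.add hw₂).add hF.snd_nhds).congr fun n => ?_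
      module
  have := sub_mem (sub_mem hsum (hmem hp hw₁)) (hmem hq hw₂)
  rwa [show w₁ + w₂ + x - w₁ - w₂ = x by abel] at this

theorem comap_quadraticOrbit_neBot (hθ : ¬ IsOfFinAddOrder (π θ)) (x : UnitAddCircle) :
    (comap (quadraticOrbit π θ) (𝓝 (0, x))).NeBot :=
  comap_nhds_neBot_of_mem_closure_range <| show x ∈ quadraticFiber π θ by
    simp only [quadraticFiber_eq_top hθ, AddSubgroup.mem_top]

end QuadraticDensity

section SymmetryFilter

/-- `r` looks, up to distance `K`, like a centre of symmetry of `G`. -/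
def IsSymmetricUpTo (G : Set ℤ) (K r : ℤ) : Prop :=
  ∀ i ∈ Icc (-K) K, r + i ∈ G ↔ r - i ∈ G

/-- The filter generated by the sets of approximate centres of symmetry of `G`. -/
def symmetryFilter (G : Set ℤ) : Filter ℤ :=
  ⨅ K, 𝓟 {r | IsSymmetricUpTo G K r}

theorem hasBasis_symmetryFilter (G : Set ℤ) :
    (symmetryFilter G).HasBasis (fun _ => True) fun K => {r | IsSymmetricUpTo G K r} :=
  hasBasis_iInf_principal <| Antitone.directed_ge fun _ _ hK _ hr i hi =>
    hr i (Icc_subset_Icc (neg_le_neg hK) hK hi)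

/-- The quadratic Bohr set `{n | ‖n² a‖ < ρ}`. -/
def quadraticBohrSet (a : UnitAddCircle) (ρ : ℝ) : Set ℤ :=
  {n | ‖n ^ 2 • a‖ < ρ}

variable {a : UnitAddCircle} {ρ : ℝ}

theorem add_mem_quadraticBohrSet {r i : ℤ} :
    r + i ∈ quadraticBohrSet a ρ ↔ ‖r ^ 2 • a + i ^ 2 • a + (2 * i) • r • a‖ < ρ := by
  rw [quadraticBohrSet, mem_ofPred_eq, show (r + i) ^ 2 • a =
    r ^ 2 • a + i ^ 2 • a + (2 * i) • r • a by module]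

theorem sub_mem_quadraticBohrSet {r i : ℤ} :
    r - i ∈ quadraticBohrSet a ρ ↔ ‖r ^ 2 • a + i ^ 2 • a - (2 * i) • r • a‖ < ρ := by
  rw [quadraticBohrSet, mem_ofPred_eq, show (r - i) ^ 2 • a =
    r ^ 2 • a + i ^ 2 • a - (2 * i) • r • a by module]

theorem exists_norm_add_lt_and_lt_norm_sub (ha : ¬ IsOfFinAddOrder a) (hρ0 : 0 < ρ)
    (hρ : ρ < 1 / 2) (x : UnitAddCircle) {y : UnitAddCircle} (hy : (4 : ℤ) • y ≠ 0) :
    ∃ i : ℤ, ‖x + i ^ 2 • a + (2 * i) • y‖ < ρ ∧ ρ < ‖x + i ^ 2 • a - (2 * i) • y‖ := by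
  obtain ⟨p, hp, hp'⟩ := exists_norm_lt_and_lt_norm_add hρ0 hρ (neg_ne_zero.2 hy)
  let π := ContinuousAddMonoidHom.fst UnitAddCircle UnitAddCircle
  have := comap_quadraticOrbit_neBot (π := π) (θ := (a, y)) ha (p - (x + a + (2 : ℤ) • y))
  set l := comap (quadraticOrbit π (a, y)) (𝓝 (0, p - (x + a + (2 : ℤ) • y)))
  have hl : Tendsto (quadraticOrbit π (a, y)) l (𝓝 (0, p - (x + a + (2 : ℤ) • y))) :=
    tendsto_comap
  have hja : Tendsto (fun j : ℤ => j • a) l (𝓝 0) := hl.fst_nhds.fst_nhds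
  have hjy : Tendsto (fun j : ℤ => j • y) l (𝓝 0) := hl.fst_nhds.snd_nhds
  have hjj : Tendsto (fun j : ℤ => j ^ 2 • a) l (𝓝 (p - (x + a + (2 : ℤ) • y))) := hl.snd_nhds
  -- `i = 1 + j` with `j • a` and `j • y` small, so that `(1 + j) ^ 2 • a ≈ a + j ^ 2 • a`
  have hlt : Tendsto (fun j : ℤ => x + (1 + j) ^ 2 • a + (2 * (1 + j)) • y) l (𝓝 p) := by
    convert (hjj.add ((hja.const_smul (2 : ℤ)).add (hjy.const_smul (2 : ℤ)))).const_add
      (x + a + (2 : ℤ) • y) using 1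
    · ext j; module
    · congr 1; module
  have hgt : Tendsto (fun j : ℤ => x + (1 + j) ^ 2 • a - (2 * (1 + j)) • y) l
      (𝓝 (p + -((4 : ℤ) • y))) := by
    convert (hjj.add ((hja.const_smul (2 : ℤ)).sub (hjy.const_smul (2 : ℤ)))).const_add
      (x + a - (2 : ℤ) • y) using 1
    · ext j; module
    · congr 1; module
  obtain ⟨j, hj, hj'⟩ :=
    ((hlt.norm.eventually_lt_const hp).and (hgt.norm.eventually_const_lt hp')).exists
  exact ⟨1 + j, hj, hj'⟩

theorem tendsto_zsmul_symmetryFilter (ha : ¬ IsOfFinAddOrder a) (hρ0 : 0 < ρ) (hρ : ρ < 1 / 2) :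
    Tendsto (fun r : ℤ => (4 : ℤ) • r • a) (symmetryFilter (quadraticBohrSet a ρ)) (𝓝 0) := by
  refine ((hasBasis_symmetryFilter _).tendsto_iff (nhds_basis_opens 0)).2 ?_
  rintro U ⟨hU0, hU⟩
  have hC : IsClosed {z : UnitAddCircle × UnitAddCircle | (4 : ℤ) • z.2 ∉ U} :=
    hU.isClosed_compl.preimage (f := fun z : UnitAddCircle × UnitAddCircle => (4 : ℤ) • z.2)
      (by fun_prop)
  obtain ⟨K, hK⟩ := exists_forall_mem_Icc_of_isCompact hC.isCompact
    (U := fun i : ℤ => {z | ‖z.1 + i ^ 2 • a + (2 * i) • z.2‖ < ρ ∧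
      ρ < ‖z.1 + i ^ 2 • a - (2 * i) • z.2‖})
    (fun i => (isOpen_lt (by fun_prop) (by fun_prop)).and (isOpen_lt (by fun_prop) (by fun_prop)))
    (fun z hz => mem_iUnion.2 <| exists_norm_add_lt_and_lt_norm_sub ha hρ0 hρ z.1
      fun h => hz (h ▸ hU0))
  refine ⟨K, trivial, fun r hr => ?_⟩
  by_contra hrU
  obtain ⟨i, hi, hlt, hgt⟩ := hK (r ^ 2 • a, r • a) hrU
  exact hgt.not_gt (sub_mem_quadraticBohrSet.1 ((hr i hi).1 (add_mem_quadraticBohrSet.2 hlt)))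

theorem frequently_symmetryFilter (ha : ¬ IsOfFinAddOrder a) {u v : ℤ}
    (huv : ‖u ^ 2 • a - v ^ 2 • a‖ < 2 * ρ) :
    ∃ᶠ r in symmetryFilter (quadraticBohrSet a ρ),
      r + u ∈ quadraticBohrSet a ρ ∧ r + v ∈ quadraticBohrSet a ρ := by
  refine (hasBasis_symmetryFilter _).frequently_iff.2 fun {K} _ => ?_
  have hfin : (⋃ i ∈ Icc (-K) K, {x : UnitAddCircle | ‖x + i ^ 2 • a‖ = ρ}).Finite :=
    (finite_Icc _ _).biUnion fun i _ =>
      (finite_setOf_norm_eq ρ).preimage (add_left_injective (i ^ 2 • a)).injOn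
  obtain ⟨x, hx, hxu, hxv⟩ := exists_notMem_and_norm_add_lt huv hfin
  have := comap_quadraticOrbit_neBot (π := .id UnitAddCircle) ha x
  set l := comap (quadraticOrbit (.id UnitAddCircle) a) (𝓝 (0, x))
  have hl : Tendsto (quadraticOrbit (.id UnitAddCircle) a) l (𝓝 (0, x)) := tendsto_comap
  have hadd (i : ℤ) : Tendsto (fun r : ℤ => r ^ 2 • a + i ^ 2 • a + (2 * i) • r • a) l
      (𝓝 (x + i ^ 2 • a)) := by
    simpa [quadraticOrbit] using
      (hl.snd_nhds.add_const (i ^ 2 • a)).add (hl.fst_nhds.const_smul (2 * i))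
  have hsub (i : ℤ) : Tendsto (fun r : ℤ => r ^ 2 • a + i ^ 2 • a - (2 * i) • r • a) l
      (𝓝 (x + i ^ 2 • a)) := by
    simpa [quadraticOrbit] using
      (hl.snd_nhds.add_const (i ^ 2 • a)).sub (hl.fst_nhds.const_smul (2 * i))
  have hx' : ∀ i ∈ Icc (-K) K, ‖x + i ^ 2 • a‖ ≠ ρ := fun i hi h => hx (mem_biUnion hi h)
  have hsymm : ∀ᶠ r in l, IsSymmetricUpTo (quadraticBohrSet a ρ) K r := by
    refine (eventually_all_finite (finite_Icc _ _)).2 fun i hi => ?_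
    filter_upwards [eventually_norm_lt_iff (hadd i) (hx' i hi),
      eventually_norm_lt_iff (hsub i) (hx' i hi)] with r h h'
    rw [add_mem_quadraticBohrSet, sub_mem_quadraticBohrSet, h, h']
  obtain ⟨r, hr, hru, hrv⟩ := (hsymm.and (((hadd u).norm.eventually_lt_const hxu).and
    ((hadd v).norm.eventually_lt_const hxv))).exists
  exact ⟨r, hr, add_mem_quadraticBohrSet.2 hru, add_mem_quadraticBohrSet.2 hrv⟩

end SymmetryFilter

section ProductPeriods

/-- Two points of `G` at distances `2(h + k)` and `2(h - k)` from a common limiting centre of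
symmetry. For `quadraticBohrSet a ρ` this means `‖16hk a‖ < 2ρ`, up to the boundary case. -/
def IsNearProduct (G : Set ℤ) (h k : ℤ) : Prop :=
  ∃ᶠ r in symmetryFilter G, r + 2 * (h + k) ∈ G ∧ r + 2 * (h - k) ∈ G

/-- `n` is a period of `h ↦ IsNearProduct G h k` on some interval of radius `M`. The centre `t` of
the interval is left free so that the boundary cases of `IsNearProduct` can be avoided. -/
def IsProductPeriod (G : Set ℤ) (k M n : ℤ) : Prop :=
  ∃ t, ∀ l ∈ Icc (-M) M, IsNearProduct G (t + l) k ↔ IsNearProduct G (t + l + n) k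

/-- The filter generated by the almost periods of `h ↦ IsNearProduct G h k`. -/
def productPeriodFilter (G : Set ℤ) (k : ℤ) : Filter ℤ :=
  ⨅ M, 𝓟 {n | IsProductPeriod G k M n}

theorem hasBasis_productPeriodFilter (G : Set ℤ) (k : ℤ) :
    (productPeriodFilter G k).HasBasis (fun _ => True) fun M => {n | IsProductPeriod G k M n} :=
  hasBasis_iInf_principal <| Antitone.directed_ge fun _ _ hM _ ⟨t, ht⟩ =>
    ⟨t, fun l hl => ht l (Icc_subset_Icc (neg_le_neg hM) hM hl)⟩

variable {a : UnitAddCircle} {ρ : ℝ}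

theorem norm_le_of_isNearProduct (ha : ¬ IsOfFinAddOrder a) (hρ0 : 0 < ρ) (hρ : ρ < 1 / 2)
    {h k : ℤ} (hhk : IsNearProduct (quadraticBohrSet a ρ) h k) :
    ‖h • k • (16 : ℤ) • a‖ ≤ 2 * ρ := by
  have hlim : Tendsto (fun r : ℤ => h • k • (16 : ℤ) • a + (2 * k) • (4 : ℤ) • r • a)
      (symmetryFilter (quadraticBohrSet a ρ)) (𝓝 (h • k • (16 : ℤ) • a)) := by
    simpa only [smul_zero, add_zero] using
      ((tendsto_zsmul_symmetryFilter ha hρ0 hρ).const_smul (2 * k)).const_add _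
  refine le_of_tendsto_of_frequently hlim.norm (hhk.mono fun r
    (hr : ‖(r + 2 * (h + k)) ^ 2 • a‖ < ρ ∧ ‖(r + 2 * (h - k)) ^ 2 • a‖ < ρ) => ?_)
  calc ‖h • k • (16 : ℤ) • a + (2 * k) • (4 : ℤ) • r • a‖
      = ‖(r + 2 * (h + k)) ^ 2 • a - (r + 2 * (h - k)) ^ 2 • a‖ := by congr 1; module
    _ ≤ ‖(r + 2 * (h + k)) ^ 2 • a‖ + ‖(r + 2 * (h - k)) ^ 2 • a‖ := norm_sub_le _ _
    _ ≤ 2 * ρ := by linarith [hr.1, hr.2]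

theorem isNearProduct_of_norm_lt (ha : ¬ IsOfFinAddOrder a) {h k : ℤ}
    (hhk : ‖h • k • (16 : ℤ) • a‖ < 2 * ρ) : IsNearProduct (quadraticBohrSet a ρ) h k := by
  refine frequently_symmetryFilter ha ?_
  rwa [show (2 * (h + k)) ^ 2 • a - (2 * (h - k)) ^ 2 • a = h • k • (16 : ℤ) • a by module]

theorem isNearProduct_iff (ha : ¬ IsOfFinAddOrder a) (hρ0 : 0 < ρ) (hρ : ρ < 1 / 2) {h k : ℤ}
    (hhk : ‖h • k • (16 : ℤ) • a‖ ≠ 2 * ρ) :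
    IsNearProduct (quadraticBohrSet a ρ) h k ↔ ‖h • k • (16 : ℤ) • a‖ < 2 * ρ :=
  ⟨fun h' => (norm_le_of_isNearProduct ha hρ0 hρ h').lt_of_ne hhk, isNearProduct_of_norm_lt ha⟩

theorem not_isOfFinAddOrder_zsmul {A : Type*} [AddGroup A] {a : A} (ha : ¬ IsOfFinAddOrder a)
    {m : ℤ} (hm : m ≠ 0) : ¬ IsOfFinAddOrder (m • a) := by
  rw [isOfFinAddOrder_iff_zsmul_eq_zero] at ha ⊢
  rintro ⟨n, hn, h⟩
  exact ha ⟨n * m, mul_ne_zero hn hm, by rwa [mul_smul]⟩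

theorem tendsto_zsmul_productPeriodFilter (ha : ¬ IsOfFinAddOrder a) (hρ0 : 0 < ρ)
    (hρ : ρ < 1 / 4) (k : ℤ) :
    Tendsto (fun n : ℤ => n • k • (16 : ℤ) • a) (productPeriodFilter (quadraticBohrSet a ρ) k)
      (𝓝 0) := by
  obtain rfl | hk := eq_or_ne k 0
  · simpa only [zero_smul, smul_zero] using tendsto_const_nhds
  set c := k • (16 : ℤ) • a
  have hc : ¬ IsOfFinAddOrder c :=
    not_isOfFinAddOrder_zsmul (not_isOfFinAddOrder_zsmul ha (by norm_num)) hk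
  refine ((hasBasis_productPeriodFilter _ _).tendsto_iff (nhds_basis_opens 0)).2 ?_
  rintro U ⟨hU0, hU⟩
  let V (l : ℤ) : Set (UnitAddCircle × UnitAddCircle) :=
    {z | ‖z.1 + l • c‖ < 2 * ρ ∧ 2 * ρ < ‖z.1 + l • c + z.2‖}
  have hcover : {z : UnitAddCircle × UnitAddCircle | z.2 ∉ U} ⊆ ⋃ l, V l := by
    rintro ⟨x, z⟩ hz
    obtain ⟨p, hp⟩ := exists_norm_lt_and_lt_norm_add (by linarith : 0 < 2 * ρ) (by linarith)
      (z := z) fun h => hz (h ▸ hU0)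
    have hopen : IsOpen {y | ‖x + y‖ < 2 * ρ ∧ 2 * ρ < ‖x + y + z‖} :=
      (isOpen_lt (by fun_prop) (by fun_prop)).and (isOpen_lt (by fun_prop) (by fun_prop))
    obtain ⟨l, hl⟩ := (denseRange_zsmul_of_not_isOfFinAddOrder hc).exists_mem_open hopen
      ⟨p - x, by simpa only [mem_ofPred_eq, add_sub_cancel] using hp⟩
    exact mem_iUnion.2 ⟨l, hl⟩
  obtain ⟨M, hM⟩ := exists_forall_mem_Icc_of_isCompact (U := V)
    (hU.isClosed_compl.preimage continuous_snd).isCompact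
    (fun l => (isOpen_lt (by fun_prop) (by fun_prop)).and (isOpen_lt (by fun_prop) (by fun_prop)))
    hcover
  refine ⟨M, trivial, fun n ⟨t, ht⟩ => ?_⟩
  by_contra hnU
  obtain ⟨l, hl, hlt, hgt⟩ := hM (t • c, n • c) hnU
  rw [← add_smul] at hlt hgt
  rw [← add_smul] at hgt
  exact hgt.not_ge (norm_le_of_isNearProduct ha hρ0 (by linarith)
    ((ht l hl).1 (isNearProduct_of_norm_lt ha hlt)))

theorem exists_forall_norm_zsmul_ne (ha : ¬ IsOfFinAddOrder a) (hρ0 : 0 < ρ) (k M : ℤ) :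
    ∃ t : ℤ, ∀ l ∈ Icc (-M) M, ‖(t + l) • k • a‖ ≠ ρ := by
  obtain rfl | hk := eq_or_ne k 0
  · exact ⟨0, fun l _ => by simpa using hρ0.ne⟩
  have hev (l : ℤ) : ∀ᶠ t : ℤ in cofinite, ‖(t + l) • k • a‖ ≠ ρ :=
    (add_left_injective l).tendsto_cofinite.eventually
      (eventually_norm_zsmul_ne (not_isOfFinAddOrder_zsmul ha hk) ρ)
  exact ((eventually_all_finite (finite_Icc (-M) M)).2 fun l _ => hev l).exists

theorem productPeriodFilter_eq_comap (ha : ¬ IsOfFinAddOrder a) (hρ0 : 0 < ρ) (hρ : ρ < 1 / 4)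
    (k : ℤ) :
    productPeriodFilter (quadraticBohrSet a ρ) k =
      comap (fun n : ℤ => n • k • (16 : ℤ) • a) (𝓝 0) := by
  refine le_antisymm (tendsto_zsmul_productPeriodFilter ha hρ0 hρ k).le_comap ?_
  refine le_iInf fun M => le_principal_iff.2 ?_
  have hρ2 : ρ < 1 / 2 := by linarith
  have ha16 : ¬ IsOfFinAddOrder ((16 : ℤ) • a) := not_isOfFinAddOrder_zsmul ha (by norm_num)
  obtain ⟨t, ht⟩ := exists_forall_norm_zsmul_ne ha16 (by linarith : 0 < 2 * ρ) k M
  have hlim (l : ℤ) : Tendsto (fun n : ℤ => (t + l + n) • k • (16 : ℤ) • a)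
      (comap (fun n : ℤ => n • k • (16 : ℤ) • a) (𝓝 0)) (𝓝 ((t + l) • k • (16 : ℤ) • a)) := by
    simpa only [add_smul _ (_ : ℤ), add_zero] using
      (tendsto_comap (f := fun n : ℤ => n • k • (16 : ℤ) • a) (x := 𝓝 0)).const_add
        ((t + l) • k • (16 : ℤ) • a)
  filter_upwards [(eventually_all_finite (finite_Icc (-M) M)).2 fun l hl =>
    (eventually_norm_lt_iff (hlim l) (ht l hl)).and ((hlim l).norm.eventually_ne (ht l hl))]
    with n hn
  refine ⟨t, fun l hl => ?_⟩
  rw [isNearProduct_iff ha hρ0 hρ2 (ht l hl), isNearProduct_iff ha hρ0 hρ2 (hn l hl).2,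
    (hn l hl).1]

theorem dvd_iff_forall_zsmul_eq_zero {b : UnitAddCircle} (hb : ¬ IsOfFinAddOrder b) {k k' : ℤ} :
    k ∣ k' ↔ ∀ w : UnitAddCircle, k • w = 0 → k' • w = 0 := by
  refine ⟨?_, fun h => ?_⟩
  · rintro ⟨c, rfl⟩ w hw
    rw [mul_comm, mul_smul, hw, smul_zero]
  obtain rfl | hk := eq_or_ne k 0
  · rw [zero_dvd_iff]
    by_contra hk'
    exact hb (isOfFinAddOrder_iff_zsmul_eq_zero.2 ⟨k', hk', h b (zero_smul _ b)⟩)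
  · have hk0 : (k : ℝ) ≠ 0 := Int.cast_ne_zero.2 hk
    have hcoe (m : ℤ) : m • ((1 / k : ℝ) : UnitAddCircle) = ((m / k : ℝ) : UnitAddCircle) := by
      rw [← AddCircle.coe_zsmul, zsmul_eq_mul, mul_one_div]
    have h' := h (1 / k : ℝ) (by
      rw [hcoe, div_self hk0]
      exact AddCircle.coe_period 1)
    rw [hcoe, AddCircle.coe_eq_zero_iff] at h'
    obtain ⟨n, hn⟩ := h'
    rw [zsmul_one, eq_div_iff hk0] at hn
    exact ⟨n, by rw [mul_comm]; exact_mod_cast hn.symm⟩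

theorem comap_zsmul_le_comap_zsmul_iff {b : UnitAddCircle} (hb : ¬ IsOfFinAddOrder b) {k k' : ℤ} :
    comap (fun n : ℤ => n • k • b) (𝓝 0) ≤ comap (fun n : ℤ => n • k' • b) (𝓝 0) ↔ k ∣ k' := by
  constructor
  · refine fun h => (dvd_iff_forall_zsmul_eq_zero hb).2 fun w hw => ?_
    have := comap_nhds_neBot_of_mem_closure_range (denseRange_zsmul_of_not_isOfFinAddOrder hb w)
    have hlim (m : ℤ) :
        Tendsto (fun n : ℤ => n • m • b) (comap (fun n : ℤ => n • b) (𝓝 w)) (𝓝 (m • w)) := by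
      simpa only [smul_comm m] using
        (tendsto_comap (f := fun n : ℤ => n • b)).const_smul m
    have hle := (hw ▸ hlim k).le_comap.trans h
    exact tendsto_nhds_unique (hlim k') (tendsto_comap.mono_left hle)
  · rintro ⟨c, rfl⟩
    refine Tendsto.le_comap ?_
    have := (tendsto_comap (f := fun n : ℤ => n • k • b) (x := 𝓝 0)).const_smul c
    rw [smul_zero] at this
    exact this.congr fun n => by module

theorem productPeriodFilter_le_iff_dvd (ha : ¬ IsOfFinAddOrder a) (hρ0 : 0 < ρ) (hρ : ρ < 1 / 4)
    {k k' : ℤ} :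
    productPeriodFilter (quadraticBohrSet a ρ) k ≤ productPeriodFilter (quadraticBohrSet a ρ) k' ↔
      k ∣ k' := by
  rw [productPeriodFilter_eq_comap ha hρ0 hρ, productPeriodFilter_eq_comap ha hρ0 hρ,
    comap_zsmul_le_comap_zsmul_iff (not_isOfFinAddOrder_zsmul ha (by norm_num))]

end ProductPeriods

section FirstOrderClosed

variable {M : Type*} {D : ((ℕ → M) → Prop) → Prop}

/-- Closure of a class of predicates of assignments `ℕ → M` under first-order logic. The bound
variable of a quantifier is the variable `0`, the others being shifted by one. -/
structure FirstOrderClosed (D : ((ℕ → M) → Prop) → Prop) : Prop where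
  not {P : (ℕ → M) → Prop} : D P → D (fun v => ¬ P v)
  and {P Q : (ℕ → M) → Prop} : D P → D Q → D (fun v => P v ∧ Q v)
  ex {P : (ℕ → M) → M → Prop} :
    D (fun v => P (fun i => v (i + 1)) (v 0)) → D (fun v => ∃ x, P v x)
  rename {P : (ℕ → M) → Prop} (σ : ℕ → ℕ) : D P → D (fun v => P (fun i => v (σ i)))
  var_eq_var : D (fun v => v 0 = v 1)

/-- The function `t` of an assignment is definable with respect to the class `D` if its graph is,
the value being the variable `0` and the arguments being shifted by one. -/
def IsDefinableFun (D : ((ℕ → M) → Prop) → Prop) (t : (ℕ → M) → M) : Prop :=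
  D (fun v => v 0 = t (fun i => v (i + 1)))

theorem of_forall_iff {P Q : (ℕ → M) → Prop} (hP : D P) (hPQ : ∀ v, Q v ↔ P v) : D Q := by
  rwa [funext fun v => propext (hPQ v)]

namespace FirstOrderClosed

variable (h : FirstOrderClosed D) {P Q : (ℕ → M) → Prop} {s t u : (ℕ → M) → M}
include h

theorem or (hP : D P) (hQ : D Q) : D (fun v => P v ∨ Q v) :=
  of_forall_iff (h.not (h.and (h.not hP) (h.not hQ))) fun _ => or_iff_not_and_not

theorem imp (hP : D P) (hQ : D Q) : D (fun v => P v → Q v) :=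
  of_forall_iff (h.not (h.and hP (h.not hQ))) fun _ => not_and_not_right.symm

theorem iff (hP : D P) (hQ : D Q) : D (fun v => P v ↔ Q v) :=
  of_forall_iff (h.and (h.imp hP hQ) (h.imp hQ hP)) fun _ => iff_iff_implies_and_implies

theorem all {R : (ℕ → M) → M → Prop} (hR : D (fun v => R (fun i => v (i + 1)) (v 0))) :
    D (fun v => ∀ x, R v x) :=
  of_forall_iff (P := fun v => ¬ ∃ x, ¬ R v x) (h.not (h.ex (h.not hR))) fun _ =>
    not_exists_not.symm

theorem var (k : ℕ) : IsDefinableFun D (fun v => v k) :=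
  h.rename (fun i => if i = 0 then 0 else k + 1) h.var_eq_var

theorem shift (ht : IsDefinableFun D t) : IsDefinableFun D (fun v => t (fun i => v (i + 1))) :=
  h.rename (fun i => if i = 0 then 0 else i + 1) ht

theorem subst {R : M → (ℕ → M) → Prop} (hs : IsDefinableFun D s)
    (hR : D (fun v => R (v 0) (fun i => v (i + 1)))) : D (fun v => R (s v) v) :=
  of_forall_iff (P := fun v => ∃ x, x = s v ∧ R x v) (h.ex (h.and hs hR)) fun _ => by
    rw [exists_eq_left]

theorem rel₁ {R : M → Prop} (hR : D (fun v => R (v 0))) (hs : IsDefinableFun D s) :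
    D (fun v => R (s v)) :=
  h.subst (R := fun x _ => R x) hs hR

theorem rel₂ {R : M → M → Prop} (hR : D (fun v => R (v 0) (v 1))) (hs : IsDefinableFun D s)
    (ht : IsDefinableFun D t) : D (fun v => R (s v) (t v)) :=
  h.subst (R := fun x v => R x (t v)) hs <|
    h.subst (R := fun y v => R (v 0) y) (h.shift ht) (h.rename (fun i => 1 - i) hR)

theorem rel₃ {R : M → M → M → Prop} (hR : D (fun v => R (v 0) (v 1) (v 2)))
    (hs : IsDefinableFun D s) (ht : IsDefinableFun D t) (hu : IsDefinableFun D u) :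
    D (fun v => R (s v) (t v) (u v)) :=
  h.subst (R := fun x v => R x (t v) (u v)) hs <|
    h.subst (R := fun y v => R (v 0) y (u (fun i => v (i + 1)))) (h.shift ht) <|
      h.subst (R := fun z v => R (v 1) (v 0) z) (h.shift (h.shift hu))
        (h.rename (P := fun v => R (v 0) (v 1) (v 2)) (fun i => 2 - i) hR)

theorem eq (hs : IsDefinableFun D s) (ht : IsDefinableFun D t) : D (fun v => s v = t v) :=
  h.rel₂ h.var_eq_var hs ht

theorem comp₁ {f : M → M} (hf : D (fun v => v 0 = f (v 1))) (hs : IsDefinableFun D s) :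
    IsDefinableFun D (fun v => f (s v)) :=
  h.rel₂ (R := fun x y => x = f y) hf (h.var 0) (h.shift hs)

theorem comp₂ {f : M → M → M} (hf : D (fun v => v 0 = f (v 1) (v 2))) (hs : IsDefinableFun D s)
    (ht : IsDefinableFun D t) : IsDefinableFun D (fun v => f (s v) (t v)) :=
  h.rel₃ (R := fun x y z => x = f y z) hf (h.var 0) (h.shift hs) (h.shift ht)

theorem comap_of_surjective {N : Type*} {π : M → N} (hπ : Function.Surjective π)
    (hker : D (fun v => π (v 0) = π (v 1))) :
    FirstOrderClosed (fun P : (ℕ → N) → Prop => D (fun v => P (fun i => π (v i)))) where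
  not := h.not
  and := h.and
  ex {P} hP := of_forall_iff (P := fun v => ∃ x, P (fun i => π (v i)) (π x)) (h.ex hP) fun _ =>
    hπ.exists
  rename σ := h.rename σ
  var_eq_var := hker

end FirstOrderClosed

end FirstOrderClosed

/-- Closure of a class of predicates of integer assignments under first-order logic over the
ordered group `(ℤ; <, +)`. -/
structure PresburgerClosed (D : ((ℕ → ℤ) → Prop) → Prop) : Prop extends FirstOrderClosed D where
  var_lt_var : D (fun v => v 0 < v 1)
  var_eq_add : D (fun v => v 0 = v 1 + v 2)

namespace PresburgerClosed

variable {D : ((ℕ → ℤ) → Prop) → Prop} (h : PresburgerClosed D) {s t k M : (ℕ → ℤ) → ℤ}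
  {G : Set ℤ} (hG : D (fun v => v 0 ∈ G))
include h

theorem lt (hs : IsDefinableFun D s) (ht : IsDefinableFun D t) : D (fun v => s v < t v) :=
  h.rel₂ h.var_lt_var hs ht

theorem le (hs : IsDefinableFun D s) (ht : IsDefinableFun D t) : D (fun v => s v ≤ t v) :=
  of_forall_iff (h.not (h.lt ht hs)) fun _ => not_lt.symm

theorem add (hs : IsDefinableFun D s) (ht : IsDefinableFun D t) :
    IsDefinableFun D (fun v => s v + t v) :=
  h.comp₂ h.var_eq_add hs ht

theorem sub (hs : IsDefinableFun D s) (ht : IsDefinableFun D t) :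
    IsDefinableFun D (fun v => s v - t v) :=
  h.comp₂ (of_forall_iff (h.eq (h.add (h.var 0) (h.var 2)) (h.var 1)) fun _ => eq_sub_iff_add_eq)
    hs ht

theorem zero : IsDefinableFun D (fun _ => 0) :=
  of_forall_iff (h.eq (h.add (h.var 0) (h.var 0)) (h.var 0)) fun _ => add_eq_left.symm

theorem one : IsDefinableFun D (fun _ => 1) :=
  of_forall_iff (P := fun v => 0 < v 0 ∧ ∀ x, 0 < x → v 0 ≤ x)
    (h.and (h.lt h.zero (h.var 0))
      (h.all (h.imp (h.lt h.zero (h.var 0)) (h.le (h.var 1) (h.var 0)))))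
    fun _ => ⟨fun e => e ▸ ⟨one_pos, fun _ => Int.add_one_le_of_lt⟩,
      fun ⟨hpos, hle⟩ => (hle 1 one_pos).antisymm hpos⟩

theorem abs (hs : IsDefinableFun D s) : IsDefinableFun D (fun v => |s v|) :=
  h.comp₁ (of_forall_iff
    (h.and (h.le h.zero (h.var 0))
      (h.or (h.eq (h.var 1) (h.var 0)) (h.eq (h.var 1) (h.sub h.zero (h.var 0)))))
    fun v => by grind) hs

theorem twoMul (hs : IsDefinableFun D s) : IsDefinableFun D (fun v => 2 * s v) :=
  of_forall_iff (h.add hs hs) fun _ => Eq.congr_right (two_mul _)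

theorem mem_Icc_neg (hs : IsDefinableFun D s) (ht : IsDefinableFun D t) :
    D (fun v => s v ∈ Icc (-t v) (t v)) :=
  of_forall_iff (h.and (h.le (h.sub h.zero ht) hs) (h.le hs ht)) fun v => by rw [zero_sub, mem_Icc]

include hG

theorem isSymmetricUpTo (hs : IsDefinableFun D s) (ht : IsDefinableFun D t) :
    D (fun v => IsSymmetricUpTo G (s v) (t v)) :=
  h.all (h.imp (h.mem_Icc_neg (h.var 0) (h.shift hs))
    (h.iff (h.rel₁ hG (h.add (h.shift ht) (h.var 0))) (h.rel₁ hG (h.sub (h.shift ht) (h.var 0)))))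

theorem isNearProduct (hs : IsDefinableFun D s) (ht : IsDefinableFun D t) :
    D (fun v => IsNearProduct G (s v) (t v)) := by
  have hs₂ := h.shift (h.shift hs)
  have ht₂ := h.shift (h.shift ht)
  refine of_forall_iff (P := fun v => ∀ K, ∃ r, IsSymmetricUpTo G K r ∧
    r + 2 * (s v + t v) ∈ G ∧ r + 2 * (s v - t v) ∈ G)
    (h.all (h.ex (h.and (h.isSymmetricUpTo hG (h.var 1) (h.var 0)) (h.and ?_ ?_)))) fun v => ?_
  · exact h.rel₁ hG (h.add (h.var 0) (h.twoMul (h.add hs₂ ht₂)))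
  · exact h.rel₁ hG (h.add (h.var 0) (h.twoMul (h.sub hs₂ ht₂)))
  · exact (hasBasis_symmetryFilter G).frequently_iff.trans (by simp only [true_imp_iff]; rfl)

theorem isProductPeriod (hk : IsDefinableFun D k) (hM : IsDefinableFun D M)
    (hs : IsDefinableFun D s) : D (fun v => IsProductPeriod G (k v) (M v) (s v)) := by
  have hlt := h.add (h.var 1) (h.var 0)
  refine h.ex (h.all (h.imp (h.mem_Icc_neg (h.var 0) (h.shift (h.shift hM))) (h.iff ?_ ?_)))
  · exact h.isNearProduct hG hlt (h.shift (h.shift hk))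
  · exact h.isNearProduct hG (h.add hlt (h.shift (h.shift hs))) (h.shift (h.shift hk))

theorem productPeriodFilter_le :
    D (fun v => productPeriodFilter G (v 0) ≤ productPeriodFilter G (v 1)) := by
  refine of_forall_iff (P := fun v => ∀ N, ∃ M, ∀ n, IsProductPeriod G (v 0) M n →
    IsProductPeriod G (v 1) N n) (h.all (h.ex (h.all (h.imp ?_ ?_)))) fun v => ?_
  · exact h.isProductPeriod hG (h.var 3) (h.var 1) (h.var 0)
  · exact h.isProductPeriod hG (h.var 4) (h.var 2) (h.var 0)
  · refine ((hasBasis_productPeriodFilter G _).le_basis_iff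
      (hasBasis_productPeriodFilter G _)).trans ?_
    simp only [true_imp_iff, true_and, ofPred_subset_ofPred]

end PresburgerClosed

theorem mem_rec_iff_exists_seq {σ : Type*} (f : Part σ) (g : ℕ → σ → Part σ) (n : ℕ) (m : σ) :
    m ∈ (n.rec f fun y IH => IH.bind (g y) : Part σ) ↔
      ∃ s : ℕ → σ, s 0 ∈ f ∧ (∀ y < n, s (y + 1) ∈ g y (s y)) ∧ m = s n := by
  induction n generalizing m with
  | zero => exact ⟨fun hm => ⟨fun _ => m, hm, by simp, rfl⟩, fun ⟨_, hs, _, hm⟩ => hm ▸ hs⟩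
  | succ n ih =>
    refine Part.mem_bind_iff.trans ⟨?_, ?_⟩
    · rintro ⟨i, hi, hm⟩
      obtain ⟨s, h0, hs, rfl⟩ := (ih i).1 hi
      refine ⟨Function.update s (n + 1) m, by simpa using h0, fun y hy => ?_, by simp⟩
      rcases Nat.lt_succ_iff_lt_or_eq.1 hy with hy | rfl
      · simpa [hy.ne, (hy.trans (lt_add_one n)).ne] using hs y hy
      · simpa using hm
    · rintro ⟨s, h0, hs, rfl⟩
      exact ⟨s n, (ih _).2 ⟨s, h0, fun y hy => hs y (hy.trans (lt_add_one n)), rfl⟩,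
        hs n (lt_add_one n)⟩

theorem exists_beta_eq (s : ℕ → ℕ) (n : ℕ) : ∃ c, ∀ i ≤ n, Nat.beta c i = s i := by
  refine ⟨Nat.unbeta ((List.range (n + 1)).map s), fun i hi => ?_⟩
  simpa using Nat.beta_unbeta_coe ((List.range (n + 1)).map s) ⟨i, by simpa using by omega⟩

theorem mem_rec_iff_exists_beta (f : Part ℕ) (g : ℕ → ℕ → Part ℕ) (n m : ℕ) :
    m ∈ (n.rec f fun y IH => IH.bind (g y) : Part ℕ) ↔
      ∃ c, Nat.beta c 0 ∈ f ∧ (∀ y < n, Nat.beta c (y + 1) ∈ g y (Nat.beta c y)) ∧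
        m = Nat.beta c n := by
  rw [mem_rec_iff_exists_seq]
  refine ⟨fun ⟨s, h0, hs, hm⟩ => ?_, fun ⟨c, hc⟩ => ⟨Nat.beta c, hc⟩⟩
  obtain ⟨c, hc⟩ := exists_beta_eq s n
  refine ⟨c, hc 0 n.zero_le ▸ h0, fun y hy => ?_, hm.trans (hc n le_rfl).symm⟩
  rw [hc y hy.le, hc (y + 1) hy]
  exact hs y hy

/-- Closure of a class of predicates of natural number assignments under first-order logic over
addition and divisibility. -/
structure AddDvdClosed (D : ((ℕ → ℕ) → Prop) → Prop) : Prop extends FirstOrderClosed D where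
  var_eq_add : D (fun v => v 0 = v 1 + v 2)
  var_dvd_var : D (fun v => v 0 ∣ v 1)

/-- The graph of the partial function `f` is definable with respect to the class `D`, the argument
being the variable `0` and the value the variable `1`. -/
def IsDefinablePFun (D : ((ℕ → ℕ) → Prop) → Prop) (f : ℕ →. ℕ) : Prop :=
  D (fun v => v 1 ∈ f (v 0))

namespace AddDvdClosed

variable {D : ((ℕ → ℕ) → Prop) → Prop} (h : AddDvdClosed D) {s t : (ℕ → ℕ) → ℕ} {f g : ℕ →. ℕ}
include h

theorem add (hs : IsDefinableFun D s) (ht : IsDefinableFun D t) :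
    IsDefinableFun D (fun v => s v + t v) :=
  h.comp₂ h.var_eq_add hs ht

theorem dvd (hs : IsDefinableFun D s) (ht : IsDefinableFun D t) : D (fun v => s v ∣ t v) :=
  h.rel₂ h.var_dvd_var hs ht

theorem le (hs : IsDefinableFun D s) (ht : IsDefinableFun D t) : D (fun v => s v ≤ t v) :=
  of_forall_iff (P := fun v => ∃ x, t v = s v + x)
    (h.ex (h.eq (h.shift ht) (h.add (h.shift hs) (h.var 0)))) fun _ => le_iff_exists_add

theorem lt (hs : IsDefinableFun D s) (ht : IsDefinableFun D t) : D (fun v => s v < t v) :=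
  of_forall_iff (h.not (h.le ht hs)) fun _ => not_le.symm

theorem zero : IsDefinableFun D (fun _ => 0) :=
  of_forall_iff (h.eq (h.add (h.var 0) (h.var 0)) (h.var 0)) fun _ => Nat.add_eq_left.symm

theorem one : IsDefinableFun D (fun _ => 1) :=
  of_forall_iff (P := fun v => ∀ z, v 0 ∣ z) (h.all (h.dvd (h.var 1) (h.var 0))) fun _ =>
    isUnit_iff_eq_one.symm.trans isUnit_iff_forall_dvd

theorem lcm (hs : IsDefinableFun D s) (ht : IsDefinableFun D t) :
    IsDefinableFun D (fun v => Nat.lcm (s v) (t v)) := by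
  refine h.comp₂ (of_forall_iff (P := fun v => ∀ z, v 0 ∣ z ↔ v 1 ∣ z ∧ v 2 ∣ z)
    (h.all (h.iff (h.dvd (h.var 1) (h.var 0)) (h.and (h.dvd (h.var 2) (h.var 0))
      (h.dvd (h.var 3) (h.var 0))))) fun v => ?_) hs ht
  simp only [← Nat.lcm_dvd_iff]
  exact ⟨fun e => e ▸ fun _ => Iff.rfl,
    fun e => Nat.dvd_antisymm ((e _).2 dvd_rfl) ((e _).1 dvd_rfl)⟩

theorem mul_self_add_one (hs : IsDefinableFun D s) : IsDefinableFun D (fun v => s v * (s v + 1)) :=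
  of_forall_iff (h.lcm hs (h.add hs h.one)) fun _ =>
    Eq.congr_right (Nat.coprime_self_add_right.2 (Nat.coprime_one_right _)).lcm_eq_mul.symm

-- The product is recovered from `(x + y) (x + y + 1) = x (x + 1) + y (y + 1) + 2 x y`.
theorem mul (hs : IsDefinableFun D s) (ht : IsDefinableFun D t) :
    IsDefinableFun D (fun v => s v * t v) :=
  h.comp₂ (of_forall_iff
    (h.eq (h.mul_self_add_one (h.add (h.var 1) (h.var 2)))
      (h.add (h.add (h.mul_self_add_one (h.var 1)) (h.mul_self_add_one (h.var 2)))
        (h.add (h.var 0) (h.var 0))))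
    fun v => ⟨fun e => by rw [e]; ring, fun e => by linarith⟩) hs ht

theorem natPair (hs : IsDefinableFun D s) (ht : IsDefinableFun D t) :
    IsDefinableFun D (fun v => Nat.pair (s v) (t v)) := by
  have hlt := h.lt (h.var 1) (h.var 2)
  refine h.comp₂ (of_forall_iff (h.or
    (h.and hlt (h.eq (h.var 0) (h.add (h.mul (h.var 2) (h.var 2)) (h.var 1))))
    (h.and (h.not hlt)
      (h.eq (h.var 0) (h.add (h.add (h.mul (h.var 1) (h.var 1)) (h.var 1)) (h.var 2)))))
    fun v => ?_) hs ht
  unfold Nat.pair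
  split_ifs with hlt <;> simp [hlt]

theorem unpair_fst (hs : IsDefinableFun D s) : IsDefinableFun D (fun v => (s v).unpair.1) :=
  h.comp₁ (f := fun x => x.unpair.1) (of_forall_iff (P := fun v => ∃ y, v 1 = Nat.pair (v 0) y)
    (h.ex (h.eq (h.var 2) (h.natPair (h.var 1) (h.var 0))))
    fun v => ⟨fun e => ⟨(v 1).unpair.2, by rw [e, Nat.pair_unpair]⟩,
      fun ⟨y, e⟩ => by rw [e, Nat.unpair_pair]⟩) hs

theorem unpair_snd (hs : IsDefinableFun D s) : IsDefinableFun D (fun v => (s v).unpair.2) :=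
  h.comp₁ (f := fun x => x.unpair.2) (of_forall_iff (P := fun v => ∃ x, v 1 = Nat.pair x (v 0))
    (h.ex (h.eq (h.var 2) (h.natPair (h.var 0) (h.var 1))))
    fun v => ⟨fun e => ⟨(v 1).unpair.1, by rw [e, Nat.pair_unpair]⟩,
      fun ⟨x, e⟩ => by rw [e, Nat.unpair_pair]⟩) hs

theorem mod (hs : IsDefinableFun D s) (ht : IsDefinableFun D t) :
    IsDefinableFun D (fun v => s v % t v) := by
  refine h.comp₂ (of_forall_iff
    (P := fun v => (v 2 = 0 ∧ v 0 = v 1) ∨ (v 0 < v 2 ∧ ∃ q, v 1 = v 0 + v 2 * q))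
    (h.or (h.and (h.eq (h.var 2) h.zero) (h.eq (h.var 0) (h.var 1)))
      (h.and (h.lt (h.var 0) (h.var 2))
        (h.ex (h.eq (h.var 2) (h.add (h.var 1) (h.mul (h.var 3) (h.var 0))))))) fun v => ?_) hs ht
  rcases (v 2).eq_zero_or_pos with h0 | hpos
  · simp [h0]
  · refine ⟨fun e => .inr ⟨e ▸ Nat.mod_lt _ hpos, v 1 / v 2, e ▸ (Nat.mod_add_div _ _).symm⟩, ?_⟩
    rintro (⟨h0, -⟩ | ⟨hlt, q, e⟩)
    · exact absurd h0 hpos.ne'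
    · rw [e, Nat.add_mul_mod_self_left, Nat.mod_eq_of_lt hlt]

theorem beta (hs : IsDefinableFun D s) (ht : IsDefinableFun D t) :
    IsDefinableFun D (fun v => Nat.beta (s v) (t v)) :=
  h.mod (h.unpair_fst hs) (h.add (h.mul (h.add ht h.one) (h.unpair_snd hs)) h.one)

theorem mem (hf : IsDefinablePFun D f) (hs : IsDefinableFun D s) (ht : IsDefinableFun D t) :
    D (fun v => t v ∈ f (s v)) :=
  h.rel₂ (R := fun x y => y ∈ f x) hf hs ht

theorem pfun_coe {φ : ℕ → ℕ} (hφ : IsDefinableFun D (fun v => φ (v 0))) : IsDefinablePFun D φ :=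
  of_forall_iff (h.eq (h.var 1) hφ) fun _ => by rw [PFun.coe_val, Part.mem_some_iff]

theorem pfun_pair (hf : IsDefinablePFun D f) (hg : IsDefinablePFun D g) :
    IsDefinablePFun D (fun n => Nat.pair <$> f n <*> g n) :=
  of_forall_iff (P := fun v => ∃ x y, x ∈ f (v 0) ∧ y ∈ g (v 0) ∧ v 1 = Nat.pair x y)
    (h.ex (h.ex (h.and (h.mem hf (h.var 2) (h.var 1)) (h.and (h.mem hg (h.var 2) (h.var 0))
      (h.eq (h.var 3) (h.natPair (h.var 1) (h.var 0)))))))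
    fun v => by simp [Seq.seq, eq_comm]

theorem pfun_comp (hf : IsDefinablePFun D f) (hg : IsDefinablePFun D g) :
    IsDefinablePFun D (fun n => g n >>= f) :=
  of_forall_iff (P := fun v => ∃ x, x ∈ g (v 0) ∧ v 1 ∈ f x)
    (h.ex (h.and (h.mem hg (h.var 1) (h.var 0)) (h.mem hf (h.var 0) (h.var 2))))
    fun _ => Part.mem_bind_iff

theorem pfun_prec (hf : IsDefinablePFun D f) (hg : IsDefinablePFun D g) :
    IsDefinablePFun D (Nat.unpaired fun a n => n.rec (f a) fun y IH => do
      let i ← IH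
      g (Nat.pair a (Nat.pair y i))) := by
  have harg := h.natPair (h.unpair_fst (h.var 2))
    (h.natPair (h.var 0) (h.beta (h.var 1) (h.var 0)))
  exact of_forall_iff (h.ex (h.and
      (h.mem hf (h.unpair_fst (h.var 1)) (h.beta (h.var 0) h.zero))
      (h.and
        (h.all (h.imp (h.lt (h.var 0) (h.unpair_snd (h.var 2)))
          (h.mem hg harg (h.beta (h.var 1) (h.add (h.var 0) h.one)))))
        (h.eq (h.var 2) (h.beta (h.var 0) (h.unpair_snd (h.var 1)))))))
    fun v => mem_rec_iff_exists_beta (f (v 0).unpair.1)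
      (fun y i => g (Nat.pair (v 0).unpair.1 (Nat.pair y i))) (v 0).unpair.2 (v 1)

theorem pfun_rfind (hf : IsDefinablePFun D f) :
    IsDefinablePFun D (fun a => Nat.rfind fun n => (fun m => m = 0) <$> f (Nat.pair a n)) :=
  of_forall_iff (P := fun v => 0 ∈ f (Nat.pair (v 0) (v 1)) ∧
      ∀ k < v 1, ∃ x, x ∈ f (Nat.pair (v 0) k) ∧ x ≠ 0)
    (h.and (h.mem hf (h.natPair (h.var 0) (h.var 1)) h.zero)
      (h.all (h.imp (h.lt (h.var 0) (h.var 2)) (h.ex (h.and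
        (h.mem hf (h.natPair (h.var 2) (h.var 1)) (h.var 0)) (h.not (h.eq (h.var 0) h.zero)))))))
    fun _ => Nat.mem_rfind.trans (by simp)

theorem pfun_partrec (hf : Nat.Partrec f) : IsDefinablePFun D f := by
  induction hf with
  | zero => exact h.pfun_coe h.zero
  | succ => exact h.pfun_coe (h.add (h.var 0) h.one)
  | left => exact h.pfun_coe (h.unpair_fst (h.var 0))
  | right => exact h.pfun_coe (h.unpair_snd (h.var 0))
  | pair _ _ hf hg => exact h.pfun_pair hf hg
  | comp _ _ hf hg => exact h.pfun_comp hf hg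
  | prec _ _ hf hg => exact h.pfun_prec hf hg
  | rfind _ hf => exact h.pfun_rfind hf

end AddDvdClosed

theorem PresburgerClosed.addDvdClosed_natAbs {D : ((ℕ → ℤ) → Prop) → Prop}
    (h : PresburgerClosed D) (hdvd : D (fun v => v 0 ∣ v 1)) :
    AddDvdClosed (fun P : (ℕ → ℕ) → Prop => D (fun v => P (fun i => (v i).natAbs))) where
  toFirstOrderClosed := h.comap_of_surjective Int.natAbs_surjective <|
    of_forall_iff (h.eq (h.abs (h.var 0)) (h.abs (h.var 1))) fun v => by
      simp only [Int.abs_eq_natAbs, Nat.cast_inj]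
  var_eq_add := of_forall_iff
    (h.eq (h.abs (h.var 0)) (h.add (h.abs (h.var 1)) (h.abs (h.var 2)))) fun v => by
      simp only [Int.abs_eq_natAbs, ← Nat.cast_add, Nat.cast_inj]
  var_dvd_var := of_forall_iff hdvd fun _ => Int.natAbs_dvd_natAbs

theorem firstOrderClosed_definable (ℒ : Language) {M : Type*} [ℒ.Structure M] (A : Set M) :
    FirstOrderClosed (fun P : (ℕ → M) → Prop => A.Definable ℒ {v | P v}) where
  not := Set.Definable.compl
  and := Set.Definable.inter
  ex {P} hP := by
    let bind : ℕ → ℕ ⊕ Unit := fun i => i.casesOn (.inr ()) .inl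
    refine of_forall_iff (hP.preimage_comp bind).exists_of_finite fun v => ?_
    exact ((Equiv.funUnique Unit M).symm.surjective.exists (p := fun u => P v (u ()))).symm
  rename σ hP := hP.preimage_comp σ
  var_eq_var := (ℒ.definableFun_var 0).of_empty.ofPred_eq (ℒ.definableFun_var 1).of_empty

/-- Definability, without parameters, of a predicate of integer assignments in the structure
`(ℤ; <, +, g)`. -/
def IsDefinable (g : ℤ → ℤ) (P : (ℕ → ℤ) → Prop) : Prop :=
  letI := S g
  (∅ : Set ℤ).Definable L {v | P v}

/-- The symbol `<` of `L`. -/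
def ltSymb : L.Relations 2 := ()

/-- The symbol `+` of `L`. -/
def addSymb : L.Functions 2 := ()

/-- The symbol `g` of `L`. -/
def funSymb : L.Functions 1 := ()

theorem presburgerClosed_isDefinable (g : ℤ → ℤ) : PresburgerClosed (IsDefinable g) :=
  letI := S g
  { toFirstOrderClosed := firstOrderClosed_definable L ∅
    var_lt_var := empty_definable_iff.2 ⟨ltSymb.formula ![.var 0, .var 1], rfl⟩
    var_eq_add := (L.definableFun_var 0).ofPred_eq
      (Term.func addSymb ![.var 1, .var 2]).definableFun_realize }

theorem isDefinable_eq_apply (g : ℤ → ℤ) : IsDefinable g (fun v => v 0 = g (v 1)) :=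
  letI := S g
  (L.definableFun_var 0).ofPred_eq (Term.func funSymb ![.var 1]).definableFun_realize

section Reduction

/-- The term `x + (x + (⋯ + x))` with `n + 1` occurrences of the first of two variables. -/
def succMulTerm : ℕ → L.Term (Empty ⊕ Fin 2)
  | 0 => .var (.inr 0)
  | n + 1 => .func addSymb ![.var (.inr 0), succMulTerm n]

theorem realize_succMulTerm (g : ℤ → ℤ) (v : Empty ⊕ Fin 2 → ℤ) (n : ℕ) :
    @Term.realize L ℤ (S g) _ v (succMulTerm n) = (n + 1) * v (.inr 0) := by
  induction n with
  | zero => simp [succMulTerm]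
  | succ n ih =>
    change v (.inr 0) + @Term.realize L ℤ (S g) _ v (succMulTerm n) = _
    rw [ih]
    push_cast
    ring

/-- The sentence `∀ x y, (n + 1) x = x + y → ψ x y`. When `ψ x y` is `x = 1 → P y`, it says that
`P n` holds. Substituting a numeral for `y` is avoided, so that the code of the sentence is easily
computed from `n`. -/
def instanceSentence (ψ : L.BoundedFormula Empty 2) (n : ℕ) : L.Sentence :=
  ∀' ∀' ((succMulTerm n).bdEqual (.func addSymb ![.var (.inr 0), .var (.inr 1)]) ⟹ ψ)

theorem exists_realize_iff_of_definable {ℒ : Language} {M : Type*} [ℒ.Structure M]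
    {R : M → M → Prop} (hR : (∅ : Set M).Definable ℒ {v : ℕ → M | R (v 0) (v 1)}) :
    ∃ ψ : ℒ.BoundedFormula Empty 2, ∀ e x y, ψ.Realize e ![x, y] ↔ R x y := by
  have hR₂ : (∅ : Set M).Definable ℒ {w : Fin 2 → M | R (w 0) (w 1)} :=
    hR.preimage_comp fun i : ℕ => if i = 0 then (0 : Fin 2) else 1
  obtain ⟨φ, hφ⟩ := empty_definable_iff.1 hR₂
  refine ⟨BoundedFormula.relabel (n := 2) (k := 0) Sum.inr φ, fun e x y => ?_⟩
  rw [BoundedFormula.realize_relabel,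
    Subsingleton.elim (![x, y] ∘ Fin.natAdd 2 : Fin 0 → M) default]
  exact (Set.ext_iff.1 hφ ![x, y]).symm

theorem realize_instanceSentence (g : ℤ → ℤ) {ψ : L.BoundedFormula Empty 2} {P : ℤ → Prop}
    (hψ : ∀ e x y, @BoundedFormula.Realize L ℤ (S g) _ _ ψ e ![x, y] ↔ (x = 1 → P y)) (n : ℕ) :
    @Sentence.Realize L ℤ (S g) (instanceSentence ψ n) ↔ P n := by
  have hrealize : @Sentence.Realize L ℤ (S g) (instanceSentence ψ n) ↔
      ∀ x y : ℤ, (n + 1) * x = x + y → x = 1 → P y := by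
    refine forall₂_congr fun x y => imp_congr ?_ ?_
    · rw [@BoundedFormula.realize_bdEqual L ℤ (S g), realize_succMulTerm]
      rfl
    · rw [← hψ default]
      congr! 1
      funext i
      fin_cases i <;> rfl
  rw [hrealize]
  refine ⟨fun H => H 1 n (by ring) rfl, ?_⟩
  rintro hP _ y hy rfl
  rwa [show y = n by linarith]

theorem primrec_encode_cons {α β : Type*} [Primcodable α] [Encodable β] {b : α → β}
    {l : α → List β} (hb : Primrec fun a => Encodable.encode (b a))
    (hl : Primrec fun a => Encodable.encode (l a)) :
    Primrec fun a => Encodable.encode (b a :: l a) :=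
  Primrec.succ.comp (Primrec₂.natPair.comp hb hl)

theorem listEncode_succMulTerm_succ (n : ℕ) : (succMulTerm (n + 1)).listEncode =
    .inr ⟨2, addSymb⟩ :: .inl (.inr 0) :: (succMulTerm n).listEncode := by
  simp [succMulTerm, Term.listEncode, List.finRange_succ]

theorem primrec_of_succ_eq {u F : ℕ → ℕ} (hF : Primrec F) (hu : ∀ n, u (n + 1) = F (u n)) :
    Primrec u :=
  (Primrec.nat_rec₁ (u 0) (hF.comp₂ Primrec₂.right)).of_eq fun n => by
    induction n with
    | zero => rfl
    | succ n ih => rw [hu, ← ih]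

theorem primrec_encode_succMulTerm : Primrec fun n => Encodable.encode (succMulTerm n) :=
  primrec_of_succ_eq
    (Primrec.succ.comp (Primrec₂.natPair.comp (.const _)
      (Primrec.succ.comp (Primrec₂.natPair.comp (.const _) .id))))
    fun n => congrArg Encodable.encode (listEncode_succMulTerm_succ n)

theorem primrec_encode_instanceSentence (ψ : L.BoundedFormula Empty 2) :
    Primrec fun n => Encodable.encode (instanceSentence ψ n) := by
  have hcode : Primrec fun n => Encodable.encode
      (⟨2, succMulTerm n⟩ : Σ k, L.Term (Empty ⊕ Fin k)) :=
    Primrec₂.natPair.comp (Primrec.const 2) primrec_encode_succMulTerm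
  exact primrec_encode_cons (.const _) <| primrec_encode_cons (.const _) <|
    primrec_encode_cons (.const _) <| primrec_encode_cons
      (Primrec.nat_mul.comp (Primrec.const 2) hcode) (.const _)

theorem encode_mem_theoryCodes_iff (g : ℤ → ℤ) (φ : L.Sentence) :
    Encodable.encode φ ∈ theoryCodes g ↔ @Sentence.Realize L ℤ (S g) φ :=
  ⟨fun ⟨_, hψ, h⟩ => Encodable.encode_injective hψ ▸ h, fun h => ⟨φ, rfl, h⟩⟩

theorem manyOneReducible_theoryCodes {g : ℤ → ℤ} {P : ℤ → Prop}
    (hP : IsDefinable g (fun v => P (v 0))) :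
    (fun n : ℕ => P n) ≤₀ fun c => c ∈ theoryCodes g := by
  have h := presburgerClosed_isDefinable g
  let := S g
  obtain ⟨ψ, hψ⟩ := exists_realize_iff_of_definable (R := fun x y => x = 1 → P y)
    (h.imp (h.eq (h.var 0) h.one) (h.rel₁ hP (h.var 1)))
  exact ⟨_, (primrec_encode_instanceSentence ψ).to_comp, fun n =>
    ((encode_mem_theoryCodes_iff g _).trans (realize_instanceSentence g hψ n)).symm⟩

open Nat.Partrec in
theorem not_computablePred_theoryCodes {g : ℤ → ℤ} (hdvd : IsDefinable g (fun v => v 0 ∣ v 1)) :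
    ¬ ComputablePred (fun c => c ∈ theoryCodes g) := by
  have hD := (presburgerClosed_isDefinable g).addDvdClosed_natAbs hdvd
  have hpartrec : Nat.Partrec fun n => Code.eval (Denumerable.ofNat Code n) 0 :=
    Partrec.nat_iff.1 (Code.eval_part.comp (Computable.ofNat _) (Computable.const 0))
  have hhalts : IsDefinable g fun v =>
      ∃ m, m ∈ Code.eval (Denumerable.ofNat Code (v 0).natAbs) 0 :=
    hD.ex (P := fun v m => m ∈ Code.eval (Denumerable.ofNat Code (v 0)) 0)
      (hD.mem (hD.pfun_partrec hpartrec) (hD.var 1) (hD.var 0))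
  obtain ⟨code, hcode, hiff⟩ := manyOneReducible_theoryCodes
    (P := fun z => ∃ m, m ∈ Code.eval (Denumerable.ofNat Code z.natAbs) 0) hhalts
  refine fun hC => ComputablePred.halting_problem 0 <|
    ComputablePred.computable_of_manyOneReducible ⟨_, hcode.comp Computable.encode, fun c => ?_⟩ hC
  refine Iff.trans ?_ (hiff _)
  simp only [Int.natAbs_natCast, Denumerable.ofNat_encode, Part.dom_iff_mem]

end Reduction

theorem isDefinable_dvd {a : UnitAddCircle} (ha : ¬ IsOfFinAddOrder a) {ρ : ℝ} (hρ0 : 0 < ρ)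
    (hρ : ρ < 1 / 4) {g : ℤ → ℤ} (hg : ∀ n, g n = 1 ↔ n ∈ quadraticBohrSet a ρ) :
    IsDefinable g (fun v => v 0 ∣ v 1) := by
  have h := presburgerClosed_isDefinable g
  have hG : IsDefinable g (fun v => v 0 ∈ quadraticBohrSet a ρ) :=
    of_forall_iff (h.eq (h.comp₁ (isDefinable_eq_apply g) (h.var 0)) h.one) fun v => (hg _).symm
  exact of_forall_iff (h.productPeriodFilter_le hG) fun _ =>
    (productPeriodFilter_le_iff_dvd ha hρ0 hρ).symm

theorem mem_quadraticBohrSet_coe_iff (α ρ : ℝ) (n : ℤ) :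
    n ∈ quadraticBohrSet α ρ ↔ |α * n ^ 2 - round (α * n ^ 2)| < ρ := by
  rw [quadraticBohrSet, mem_ofPred_eq, ← AddCircle.coe_zsmul, UnitAddCircle.norm_eq, zsmul_eq_mul,
    mul_comm]
  push_cast
  rfl

theorem not_isOfFinAddOrder_coe {α : ℝ} (hα : Irrational α) :
    ¬ IsOfFinAddOrder (α : UnitAddCircle) := by
  simpa [AddCircle.not_isOfFinAddOrder_iff_forall_rat_ne_div, Irrational] using hα

theorem undecidable_general (α ρ : ℝ) (hρ0 : 0 < ρ) (hρ4 : ρ < 1 / 4) (hα : Irrational α)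
    (g : ℤ → ℤ) (hg : ∀ n : ℤ, g n = 1 ↔ |α * n ^ 2 - round (α * n ^ 2)| < ρ) :
    ¬ ComputablePred (fun c => c ∈ theoryCodes g) :=
  not_computablePred_theoryCodes <| isDefinable_dvd (not_isOfFinAddOrder_coe hα) hρ0 hρ4 fun n =>
    (hg n).trans (mem_quadraticBohrSet_coe_iff α ρ n).symm

open scoped Classical in
theorem undecidable (α ρ : ℝ) (hρ0 : 0 < ρ) (hρ4 : ρ < 1 / 4)
    (hα : ¬ ∃ q r : ℚ, α = (q : ℝ) + (r : ℝ) * ρ)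
    (g : ℤ → ℤ)
    (hg : ∀ n : ℤ, g n = if |α * n ^ 2 - round (α * n ^ 2)| < ρ then 1 else 0) :
    ¬ ComputablePred (fun c => c ∈ theoryCodes g) := by
  refine undecidable_general α ρ hρ0 hρ4 (fun ⟨q, hq⟩ => hα ⟨q, 0, by simp [hq]⟩) g fun n => ?_
  rw [hg n, ite_eq_left_iff]
  simp

end Stmt2
end

section
/- Let Q ⊆ ℤ⁴ satisfy: (Q1) for every (x₀, x₁, x₂, x₃) ∈ Q there exist k, l, m ∈ ℤ with (x₀, x₁, x₂, x₃) = (m, k·m, l·m, k·l·m); and (Q2) for every finite set F ⊆ ℤ² there exists m ∈ ℤ with m ≠ 0 such that (m, k·m, l·m, k·l·m) ∈ Q for all (k, l) ∈ F. Then the first-order theory of the structure (ℤ; +, 1, Q) is undecidable; that is, the set of sentences of the first-order language with one binary function symbol +, one constant symbol 1, and one 4-ary relation symbol Q that are true in ℤ (with the standard addition, the constant interpreted as 1, and Q interpreted as above) is not a computable set of sentences (under an effective encoding of sentences). -/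
/-!
STATEMENT 3: Let Q ⊆ ℤ⁴ satisfy (Q1) every element of Q has the form (m, k·m, l·m, k·l·m),
and (Q2) for every finite F ⊆ ℤ² there is m ≠ 0 with (m, k·m, l·m, k·l·m) ∈ Q for all
(k, l) ∈ F. Then the first-order theory of (ℤ; +, 1, Q) is undecidable.
-/

open FirstOrder Language

namespace Stmt3

/-- The language with one binary function `+`, one constant `1`,
and one 4-ary relation `Q`. -/
def L : Language :=
  ⟨fun n => match n with | 0 => Unit | 2 => Unit | _ => Empty,
   fun n => match n with | 4 => Unit | _ => Empty⟩

instance instEncF : (n : ℕ) → Encodable (L.Functions n)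
  | 0 => inferInstanceAs (Encodable Unit)
  | 1 => inferInstanceAs (Encodable Empty)
  | 2 => inferInstanceAs (Encodable Unit)
  | (_ + 3) => inferInstanceAs (Encodable Empty)

instance instEncR : (n : ℕ) → Encodable (L.Relations n)
  | 0 => inferInstanceAs (Encodable Empty)
  | 1 => inferInstanceAs (Encodable Empty)
  | 2 => inferInstanceAs (Encodable Empty)
  | 3 => inferInstanceAs (Encodable Empty)
  | 4 => inferInstanceAs (Encodable Unit)
  | (_ + 5) => inferInstanceAs (Encodable Empty)

/-- Partial inverse to `BoundedFormula.listEncode` on sentences. -/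
def decodeSentence
    (l : List ((Σ k, L.Term (Empty ⊕ Fin k)) ⊕ ((Σ n, L.Relations n) ⊕ ℕ))) :
    Option L.Sentence :=
  (BoundedFormula.listDecode l)[0]?.bind
    (fun x => if h : x.1 = 0 then
      some (cast (congrArg (L.BoundedFormula Empty) h) x.2) else none)

/-- An effective encoding of sentences (via their encodings as lists of symbols). -/
instance instEncSentence : Encodable L.Sentence :=
  Encodable.ofLeftInjection
    (fun φ => BoundedFormula.listEncode φ)
    decodeSentence
    (fun φ => by
      have h := BoundedFormula.listDecode_encode_list (L := L) (α := Empty) [⟨0, φ⟩]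
      rw [List.flatMap_singleton] at h
      have h' : BoundedFormula.listDecode (BoundedFormula.listEncode φ) =
          [⟨0, φ⟩] := h
      simp [decodeSentence, h'])

/-- The structure on ℤ interpreting `+`, `1` and `Q`. -/
def S (Q : Set (ℤ × ℤ × ℤ × ℤ)) : L.Structure ℤ where
  funMap {n} f x :=
    match n, f with
    | 0, _ => 1
    | 2, _ => x 0 + x 1
  RelMap {n} r x :=
    match n, r with
    | 4, _ => (x 0, x 1, x 2, x 3) ∈ Q

/-- The first-order theory of (ℤ; +, 1, Q), as a set of codes of sentences. -/
def theoryCodes (Q : Set (ℤ × ℤ × ℤ × ℤ)) : Set ℕ :=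
  {c | ∃ φ : L.Sentence, Encodable.encode φ = c ∧ @Sentence.Realize L ℤ (S Q) φ}

/-!
Measure everything in units of `m`. By (Q2) there are, for every `n`, numbers `m ≠ 0` such that `Q`
contains all products among `0, m, …, n * m`, and by (Q1) it then contains the correct products
only. Such segments are recognized by a first-order formula: by Lagrange's four-square theorem the
order is given by sums of squares, and squares in units of `m` are read off from `Q`. An
existential arithmetical statement, possibly with bounded universal quantifiers, is true if and only
if it holds inside some such segment. As every recursively enumerable set has a definition of this
kind, it many-one reduces to the theory of `(ℤ; +, 1, Q)`.
-/

/-! ### `Σ₁` relations -/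

/-- The `Σ₁` relations on `ℕ`: those obtained from equality, the constant `1` and the graphs of `+`
and `*` by conjunction, disjunction, existential quantification and universal quantification
bounded by a variable. The quantified variable is the value at `none` of a valuation of
`Option α`. -/
inductive IsSigmaOne : {α : Type} → ((α → ℕ) → Prop) → Prop
  | eq {α : Type} (i j : α) : IsSigmaOne fun v => v i = v j
  | one {α : Type} (i : α) : IsSigmaOne fun v => v i = 1
  | add {α : Type} (i j k : α) : IsSigmaOne fun v => v i + v j = v k
  | mul {α : Type} (i j k : α) : IsSigmaOne fun v => v i * v j = v k
  | and {α : Type} {R R' : (α → ℕ) → Prop} :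
      IsSigmaOne R → IsSigmaOne R' → IsSigmaOne fun v => R v ∧ R' v
  | or {α : Type} {R R' : (α → ℕ) → Prop} :
      IsSigmaOne R → IsSigmaOne R' → IsSigmaOne fun v => R v ∨ R' v
  | ex {α : Type} {R : (α → ℕ) → ℕ → Prop} :
      IsSigmaOne (fun w : Option α → ℕ => R (fun i => w (some i)) (w none)) →
      IsSigmaOne fun v => ∃ y, R v y
  | ball {α : Type} {R : (α → ℕ) → ℕ → Prop} (k : α) :
      IsSigmaOne (fun w : Option α → ℕ => R (fun i => w (some i)) (w none)) →
      IsSigmaOne fun v => ∀ y < v k, R v y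

/-- A function whose graph is `Σ₁`; the value of the function is the variable `none`. -/
def IsSigmaOneFun {α : Type} (f : (α → ℕ) → ℕ) : Prop :=
  IsSigmaOne fun w : Option α → ℕ => f (fun i => w (some i)) = w none

section SigmaOne

variable {α β : Type} {R : (α → ℕ) → Prop} {f g : (α → ℕ) → ℕ}

theorem IsSigmaOne.congr {R' : (α → ℕ) → Prop} (h : IsSigmaOne R) (e : ∀ v, R v ↔ R' v) :
    IsSigmaOne R' :=
  (funext fun v => propext (e v) : R = R') ▸ h

theorem IsSigmaOne.relabel (h : IsSigmaOne R) (σ : α → β) :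
    IsSigmaOne fun v : β → ℕ => R fun i => v (σ i) := by
  induction h generalizing β with
  | eq i j => exact eq _ _
  | one i => exact one _
  | add i j k => exact add _ _ _
  | mul i j k => exact mul _ _ _
  | and _ _ h h' => exact (h σ).and (h' σ)
  | or _ _ h h' => exact (h σ).or (h' σ)
  | ex _ h => exact ex (h (Option.map σ))
  | ball k _ h => exact ball (σ k) (h (Option.map σ))

theorem IsSigmaOneFun.relabel (hf : IsSigmaOneFun f) (σ : α → β) :
    IsSigmaOneFun fun v : β → ℕ => f fun i => v (σ i) :=
  IsSigmaOne.relabel hf (Option.map σ)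

theorem IsSigmaOneFun.weaken (hf : IsSigmaOneFun f) :
    IsSigmaOneFun fun w : Option α → ℕ => f fun i => w (some i) :=
  hf.relabel some

theorem IsSigmaOneFun.var (i : α) : IsSigmaOneFun fun v => v i :=
  IsSigmaOne.eq _ _

theorem IsSigmaOne.subst {R : (α → ℕ) → ℕ → Prop}
    (hR : IsSigmaOne fun w : Option α → ℕ => R (fun i => w (some i)) (w none))
    (hf : IsSigmaOneFun f) : IsSigmaOne fun v => R v (f v) :=
  (ex (R := fun v y => f v = y ∧ R v y) (and hf hR)).congr fun v => by simp

theorem IsSigmaOne.comp₂ {R : ℕ → ℕ → Prop}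
    (hR : IsSigmaOne fun v : Fin 2 → ℕ => R (v 0) (v 1))
    (hf : IsSigmaOneFun f) (hg : IsSigmaOneFun g) : IsSigmaOne fun v => R (f v) (g v) :=
  have hRg : IsSigmaOne fun w : Option α → ℕ => R (w none) (g fun i => w (some i)) :=
    subst (R := fun w y => R (w none) y) (hR.relabel ![some none, none]) hg.weaken
  subst (R := fun v x => R x (g v)) hRg hf

theorem IsSigmaOneFun.comp₂ {op : ℕ → ℕ → ℕ}
    (hop : IsSigmaOne fun v : Fin 3 → ℕ => op (v 0) (v 1) = v 2)
    (hf : IsSigmaOneFun f) (hg : IsSigmaOneFun g) : IsSigmaOneFun fun v => op (f v) (g v) :=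
  have hopg : IsSigmaOne fun w : Option (Option α) → ℕ =>
      op (w none) (g fun i => w (some (some i))) = w (some none) :=
    .subst (R := fun w y => op (w none) y = w (some none))
      (hop.relabel ![some none, none, some (some none)]) hg.weaken.weaken
  .subst (R := fun w x => op x (g fun i => w (some i)) = w none) hopg hf.weaken

theorem IsSigmaOneFun.of_graph {R : (α → ℕ) → ℕ → Prop}
    (hR : IsSigmaOne fun w : Option α → ℕ => R (fun i => w (some i)) (w none))
    (e : ∀ v y, R v y ↔ f v = y) : IsSigmaOneFun f :=
  hR.congr fun _ => e _ _

theorem IsSigmaOneFun.zero : IsSigmaOneFun fun _ : α → ℕ => 0 :=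
  (IsSigmaOne.add none none none).congr fun w => by simp [eq_comm]

theorem IsSigmaOneFun.one : IsSigmaOneFun fun _ : α → ℕ => 1 :=
  (IsSigmaOne.one none).congr fun w => by simp [eq_comm]

theorem IsSigmaOneFun.add (hf : IsSigmaOneFun f) (hg : IsSigmaOneFun g) :
    IsSigmaOneFun fun v => f v + g v :=
  comp₂ (IsSigmaOne.add 0 1 2) hf hg

theorem IsSigmaOneFun.mul (hf : IsSigmaOneFun f) (hg : IsSigmaOneFun g) :
    IsSigmaOneFun fun v => f v * g v :=
  comp₂ (IsSigmaOne.mul 0 1 2) hf hg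

theorem IsSigmaOne.fun_eq (hf : IsSigmaOneFun f) (hg : IsSigmaOneFun g) :
    IsSigmaOne fun v => f v = g v :=
  comp₂ (eq 0 1) hf hg

theorem IsSigmaOne.fun_le (hf : IsSigmaOneFun f) (hg : IsSigmaOneFun g) :
    IsSigmaOne fun v => f v ≤ g v :=
  (ex (R := fun v y => g v = f v + y) (fun_eq hg.weaken (hf.weaken.add (.var none)))).congr
    fun _ => le_iff_exists_add.symm

theorem IsSigmaOne.fun_lt (hf : IsSigmaOneFun f) (hg : IsSigmaOneFun g) :
    IsSigmaOne fun v => f v < g v :=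
  fun_le (hf.add .one) hg

theorem IsSigmaOneFun.mod (hf : IsSigmaOneFun f) (hg : IsSigmaOneFun g) :
    IsSigmaOneFun fun v => f v % g v := by
  refine of_graph (R := fun v y => (y < g v ∨ g v = 0) ∧ ∃ q, y + g v * q = f v)
    (((IsSigmaOne.fun_lt (var _) hg.weaken).or (.fun_eq hg.weaken zero)).and
      (.ex (.fun_eq ((var _).add (hg.weaken.weaken.mul (var _))) hf.weaken.weaken)))
    fun v y => ⟨?_, ?_⟩
  · rintro ⟨hlt | hz, q, hq⟩
    · rw [← hq, Nat.add_mul_mod_self_left, Nat.mod_eq_of_lt hlt]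
    · rw [← hq, hz, zero_mul, add_zero, Nat.mod_zero]
  · rintro rfl
    exact ⟨(Nat.eq_zero_or_pos _).symm.imp_left (Nat.mod_lt _), _, Nat.mod_add_div _ _⟩

theorem IsSigmaOneFun.pair (hf : IsSigmaOneFun f) (hg : IsSigmaOneFun g) :
    IsSigmaOneFun fun v => Nat.pair (f v) (g v) := by
  refine of_graph
    (R := fun v y => (f v < g v ∧ g v * g v + f v = y) ∨ (g v ≤ f v ∧ f v * f v + f v + g v = y))
    (((IsSigmaOne.fun_lt hf.weaken hg.weaken).and
        (.fun_eq ((hg.weaken.mul hg.weaken).add hf.weaken) (var _))).or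
      ((IsSigmaOne.fun_le hg.weaken hf.weaken).and
        (.fun_eq (((hf.weaken.mul hf.weaken).add hf.weaken).add hg.weaken) (var _))))
    fun v y => ?_
  unfold Nat.pair
  split_ifs with hlt
  · simp only [hlt, hlt.not_ge, true_and, false_and, or_false]
  · simp only [hlt, not_lt.1 hlt, true_and, false_and, false_or]

theorem IsSigmaOneFun.unpair_fst (hf : IsSigmaOneFun f) :
    IsSigmaOneFun fun v => (f v).unpair.1 := by
  refine of_graph (R := fun v a => ∃ b, Nat.pair a b = f v)
    (.ex (.fun_eq (pair (var _) (var _)) hf.weaken.weaken)) fun v a => ⟨?_, ?_⟩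
  · rintro ⟨b, hb⟩
    rw [← hb, Nat.unpair_pair]
  · rintro rfl
    exact ⟨_, Nat.pair_unpair _⟩

theorem IsSigmaOneFun.unpair_snd (hf : IsSigmaOneFun f) :
    IsSigmaOneFun fun v => (f v).unpair.2 := by
  refine of_graph (R := fun v b => ∃ a, Nat.pair a b = f v)
    (.ex (.fun_eq (pair (var _) (var _)) hf.weaken.weaken)) fun v b => ⟨?_, ?_⟩
  · rintro ⟨a, ha⟩
    rw [← ha, Nat.unpair_pair]
  · rintro rfl
    exact ⟨_, Nat.pair_unpair _⟩

theorem IsSigmaOneFun.beta (hf : IsSigmaOneFun f) (hg : IsSigmaOneFun g) :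
    IsSigmaOneFun fun v => Nat.beta (f v) (g v) :=
  hf.unpair_fst.mod (((hg.add one).mul hf.unpair_snd).add one)

end SigmaOne

/-! ### Partial recursive functions are `Σ₁` -/

theorem exists_beta_eq (σ : ℕ → ℕ) (k : ℕ) : ∃ c, ∀ i ≤ k, Nat.beta c i = σ i := by
  refine ⟨Nat.unbeta (List.ofFn fun i : Fin (k + 1) => σ i), fun i hi => ?_⟩
  simpa [-List.ofFn_succ] using
    Nat.beta_unbeta_coe (List.ofFn fun i : Fin (k + 1) => σ i)
      ⟨i, by rw [List.length_ofFn]; exact Nat.lt_succ_of_le hi⟩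

theorem mem_natRec_bind_iff {γ : Type*} {x : Part γ} {step : ℕ → γ → Part γ} {k : ℕ} {r : γ} :
    r ∈ Nat.rec (motive := fun _ => Part γ) x (fun i y => y.bind (step i)) k ↔
      ∃ σ : ℕ → γ, σ 0 ∈ x ∧ σ k = r ∧ ∀ i < k, σ (i + 1) ∈ step i (σ i) := by
  induction k generalizing r with
  | zero =>
    refine ⟨fun hr => ⟨fun _ => r, hr, rfl, by simp⟩, ?_⟩
    rintro ⟨σ, h0, rfl, -⟩
    exact h0
  | succ k ih =>
    rw [Part.mem_bind_iff]
    constructor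
    · rintro ⟨y, hy, hr⟩
      obtain ⟨σ, h0, rfl, hσ⟩ := ih.1 hy
      refine ⟨fun i => if i ≤ k then σ i else r, by simpa using h0, by simp, fun i hi => ?_⟩
      rcases Nat.lt_succ_iff_lt_or_eq.1 hi with hlt | rfl
      · simpa [Nat.succ_le_of_lt hlt, hlt.le] using hσ i hlt
      · simpa using hr
    · rintro ⟨σ, h0, rfl, hσ⟩
      exact ⟨σ k, ih.2 ⟨σ, h0, rfl, fun i hi => hσ i (hi.trans k.lt_succ_self)⟩,
        hσ k k.lt_succ_self⟩

theorem mem_natRec_bind_iff_exists_beta {x : Part ℕ} {step : ℕ → ℕ → Part ℕ} {k r : ℕ} :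
    r ∈ Nat.rec (motive := fun _ => Part ℕ) x (fun i y => y.bind (step i)) k ↔
      ∃ c, Nat.beta c 0 ∈ x ∧ Nat.beta c k = r ∧
        ∀ i < k, Nat.beta c (i + 1) ∈ step i (Nat.beta c i) := by
  rw [mem_natRec_bind_iff]
  constructor
  · rintro ⟨σ, h0, hk, hσ⟩
    obtain ⟨c, hc⟩ := exists_beta_eq σ k
    refine ⟨c, by rwa [hc 0 k.zero_le], by rwa [hc k le_rfl], fun i hi => ?_⟩
    rw [hc i hi.le, hc (i + 1) hi]
    exact hσ i hi
  · rintro ⟨c, h⟩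
    exact ⟨Nat.beta c, h⟩

/-- A partial function whose graph is `Σ₁`. -/
def IsSigmaOnePartFun (f : ℕ →. ℕ) : Prop :=
  IsSigmaOne fun v : Fin 2 → ℕ => v 1 ∈ f (v 0)

section PartialRecursive

variable {f g : ℕ →. ℕ}

theorem IsSigmaOnePartFun.mem {α : Type} {a b : (α → ℕ) → ℕ} (hf : IsSigmaOnePartFun f)
    (ha : IsSigmaOneFun a) (hb : IsSigmaOneFun b) : IsSigmaOne fun v => b v ∈ f (a v) :=
  IsSigmaOne.comp₂ (R := fun x y => y ∈ f x) hf ha hb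

theorem IsSigmaOneFun.isSigmaOnePartFun {a : ℕ → ℕ}
    (ha : IsSigmaOneFun fun v : Fin 2 → ℕ => a (v 0)) : IsSigmaOnePartFun (a : ℕ →. ℕ) :=
  (IsSigmaOne.fun_eq (var 1) ha).congr fun _ => Part.mem_some_iff.symm

theorem IsSigmaOnePartFun.pair (hf : IsSigmaOnePartFun f) (hg : IsSigmaOnePartFun g) :
    IsSigmaOnePartFun fun n => Nat.pair <$> f n <*> g n := by
  have h : IsSigmaOne fun v : Fin 2 → ℕ =>
      ∃ a, a ∈ f (v 0) ∧ ∃ b, b ∈ g (v 0) ∧ Nat.pair a b = v 1 :=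
    .ex <| (hf.mem (.var _) (.var _)).and <| .ex <| (hg.mem (.var _) (.var _)).and <|
      .fun_eq (.pair (.var _) (.var _)) (.var _)
  exact h.congr fun v => by simp [Seq.seq]

theorem IsSigmaOnePartFun.comp (hf : IsSigmaOnePartFun f) (hg : IsSigmaOnePartFun g) :
    IsSigmaOnePartFun fun n => g n >>= f := by
  have h : IsSigmaOne fun v : Fin 2 → ℕ => ∃ a, a ∈ g (v 0) ∧ v 1 ∈ f a :=
    .ex ((hg.mem (.var _) (.var _)).and (hf.mem (.var _) (.var _)))
  exact h.congr fun _ => Part.mem_bind_iff.symm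

theorem IsSigmaOnePartFun.prec (hf : IsSigmaOnePartFun f) (hg : IsSigmaOnePartFun g) :
    IsSigmaOnePartFun (Nat.unpaired fun a n => n.rec (f a) fun y IH => do
      let i ← IH
      g (Nat.pair a (Nat.pair y i))) := by
  have h : IsSigmaOne fun v : Fin 2 → ℕ => ∃ c, Nat.beta c 0 ∈ f (v 0).unpair.1 ∧
      Nat.beta c (v 0).unpair.2 = v 1 ∧ ∃ k, k = (v 0).unpair.2 ∧ ∀ i < k,
        Nat.beta c (i + 1) ∈ g (Nat.pair (v 0).unpair.1 (Nat.pair i (Nat.beta c i))) := by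
    refine .ex <| .and (hf.mem (.unpair_fst (.var _)) (.beta (.var _) .zero)) <|
      .and (.fun_eq (.beta (.var _) (.unpair_snd (.var _))) (.var _)) <| .ex <|
      .and (.fun_eq (.var _) (.unpair_snd (.var _))) <| .ball _ ?_
    exact hg.mem (.pair (.unpair_fst (.var _)) (.pair (.var _) (.beta (.var _) (.var _))))
      (.beta (.var _) (.add (.var _) .one))
  refine h.congr fun v => Iff.trans ?_ mem_natRec_bind_iff_exists_beta.symm
  simp

theorem IsSigmaOnePartFun.rfind (hf : IsSigmaOnePartFun f) :
    IsSigmaOnePartFun fun a => Nat.rfind fun n => (fun m => m = 0) <$> f (Nat.pair a n) := by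
  have h : IsSigmaOne fun v : Fin 2 → ℕ => 0 ∈ f (Nat.pair (v 0) (v 1)) ∧
      ∀ i < v 1, ∃ z, 0 < z ∧ z ∈ f (Nat.pair (v 0) i) :=
    (hf.mem (.pair (.var _) (.var _)) .zero).and <| .ball _ <| .ex <|
      (IsSigmaOne.fun_lt .zero (.var _)).and (hf.mem (.pair (.var _) (.var _)) (.var _))
  refine h.congr fun v => Iff.trans ?_ Nat.mem_rfind.symm
  simp [Nat.pos_iff_ne_zero, and_comm]

theorem isSigmaOnePartFun_of_partrec (hf : Nat.Partrec f) : IsSigmaOnePartFun f := by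
  induction hf with
  | zero => exact IsSigmaOneFun.zero.isSigmaOnePartFun
  | succ => exact ((IsSigmaOneFun.var 0).add .one).isSigmaOnePartFun
  | left => exact (IsSigmaOneFun.var 0).unpair_fst.isSigmaOnePartFun
  | right => exact (IsSigmaOneFun.var 0).unpair_snd.isSigmaOnePartFun
  | pair _ _ hf hg => exact hf.pair hg
  | comp _ _ hf hg => exact hf.comp hg
  | prec _ _ hf hg => exact hf.prec hg
  | rfind _ hf => exact hf.rfind

theorem isSigmaOne_of_rePred {γ : Type*} [Primcodable γ] {p : γ → Prop} (hp : REPred p) :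
    IsSigmaOne fun v : Unit → ℕ => ∃ a ∈ Encodable.decode (α := γ) (v ()), p a := by
  have h : IsSigmaOne fun v : Unit → ℕ => ∃ y, y ∈ Part.bind (Encodable.decode (α := γ) (v ()))
      fun a => (Part.assert (p a) fun _ => Part.some ()).map Encodable.encode :=
    .ex ((isSigmaOnePartFun_of_partrec hp).mem (.var _) (.var _))
  refine h.congr fun v => ?_
  simp

end PartialRecursive

/-! ### Definability in `(ℤ; +, 1, Q)` -/

/-- First-order definability without parameters in `(ℤ; +, 1, Q)`, for predicates on valuations. -/
def DefinablePred (Q : Set (ℤ × ℤ × ℤ × ℤ)) {α : Type} (P : (α → ℤ) → Prop) : Prop :=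
  letI := S Q
  (∅ : Set ℤ).Definable L {v | P v}

/-- The term `s + t`. -/
def addTerm {α : Type} (s t : L.Term α) : L.Term α :=
  Functions.apply₂ (() : L.Functions 2) s t

section Definability

variable {Q : Set (ℤ × ℤ × ℤ × ℤ)} {α β : Type} {P P' : (α → ℤ) → Prop}

theorem definablePred_iff_exists_formula :
    DefinablePred Q P ↔ ∃ φ : L.Formula α, ∀ v, @Formula.Realize L ℤ (S Q) α φ v ↔ P v := by
  let := S Q
  refine Set.empty_definable_iff.trans (exists_congr fun φ => ?_)
  exact Set.ext_iff.trans (forall_congr' fun _ => Iff.comm)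

namespace DefinablePred

theorem congr (h : DefinablePred Q P) (e : ∀ v, P v ↔ P' v) : DefinablePred Q P' :=
  (funext fun v => propext (e v) : P = P') ▸ h

theorem relabel (h : DefinablePred Q P) (σ : α → β) :
    DefinablePred Q fun v : β → ℤ => P fun i => v (σ i) :=
  let := S Q
  Set.Definable.preimage_comp σ h

theorem and (h : DefinablePred Q P) (h' : DefinablePred Q P') :
    DefinablePred Q fun v => P v ∧ P' v :=
  let := S Q
  Set.Definable.inter h h'

theorem or (h : DefinablePred Q P) (h' : DefinablePred Q P') :
    DefinablePred Q fun v => P v ∨ P' v :=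
  let := S Q
  Set.Definable.union h h'

theorem not (h : DefinablePred Q P) : DefinablePred Q fun v => ¬ P v :=
  let := S Q
  Set.Definable.compl h

theorem imp (h : DefinablePred Q P) (h' : DefinablePred Q P') :
    DefinablePred Q fun v => P v → P' v :=
  (h.not.or h').congr fun _ => imp_iff_not_or.symm

theorem ex {P : (α → ℤ) → ℤ → Prop}
    (h : DefinablePred Q fun w : Option α → ℤ => P (fun i => w (some i)) (w none)) :
    DefinablePred Q fun v => ∃ y, P v y :=
  let := S Q
  have h' : DefinablePred Q fun v => ∃ u : Unit → ℤ, P v (u ()) :=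
    Set.Definable.exists_of_finite (h.relabel fun o => o.elim (Sum.inr ()) Sum.inl)
  h'.congr fun _ => (Equiv.funUnique Unit ℤ).exists_congr_left.trans Iff.rfl

theorem all {P : (α → ℤ) → ℤ → Prop}
    (h : DefinablePred Q fun w : Option α → ℤ => P (fun i => w (some i)) (w none)) :
    DefinablePred Q fun v => ∀ y, P v y :=
  h.not.ex.not.congr fun _ => not_exists_not

theorem eq (i j : α) : DefinablePred Q fun v => v i = v j :=
  let := S Q
  definablePred_iff_exists_formula.2
    ⟨Term.equal (.var i) (.var j), fun _ => Formula.realize_equal⟩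

theorem mem (i j k l : α) : DefinablePred Q fun v => (v i, v j, v k, v l) ∈ Q :=
  let := S Q
  definablePred_iff_exists_formula.2
    ⟨Relations.formula (n := 4) (() : Unit) ![.var i, .var j, .var k, .var l],
      fun _ => Formula.realize_rel⟩

theorem add (i j k : α) : DefinablePred Q fun v => v i + v j = v k :=
  let := S Q
  definablePred_iff_exists_formula.2
    ⟨Term.equal (addTerm (.var i) (.var j)) (.var k), fun _ => Formula.realize_equal⟩

end DefinablePred

/-- A function with definable graph; the value of the function is the variable `none`. -/
def DefinableFun (Q : Set (ℤ × ℤ × ℤ × ℤ)) (f : (α → ℤ) → ℤ) : Prop :=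
  DefinablePred Q fun w : Option α → ℤ => f (fun i => w (some i)) = w none

variable {f g : (α → ℤ) → ℤ}

theorem DefinableFun.weaken (hf : DefinableFun Q f) :
    DefinableFun Q fun w : Option α → ℤ => f fun i => w (some i) :=
  DefinablePred.relabel hf (Option.map some)

theorem DefinableFun.var (i : α) : DefinableFun Q fun v => v i :=
  DefinablePred.eq _ _

theorem DefinableFun.zero : DefinableFun Q fun _ : α → ℤ => 0 :=
  (DefinablePred.add none none none).congr fun w => by simp [eq_comm]

theorem DefinablePred.subst {P : (α → ℤ) → ℤ → Prop}
    (hP : DefinablePred Q fun w : Option α → ℤ => P (fun i => w (some i)) (w none))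
    (hf : DefinableFun Q f) : DefinablePred Q fun v => P v (f v) :=
  (ex (P := fun v y => f v = y ∧ P v y) (and hf hP)).congr fun v => by simp

theorem DefinableFun.comp₂ {op : ℤ → ℤ → ℤ}
    (hop : DefinablePred Q fun v : Fin 3 → ℤ => op (v 0) (v 1) = v 2)
    (hf : DefinableFun Q f) (hg : DefinableFun Q g) : DefinableFun Q fun v => op (f v) (g v) :=
  have hopg : DefinablePred Q fun w : Option (Option α) → ℤ =>
      op (w none) (g fun i => w (some (some i))) = w (some none) :=
    .subst (P := fun w y => op (w none) y = w (some none))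
      (hop.relabel ![some none, none, some (some none)]) hg.weaken.weaken
  .subst (P := fun w x => op x (g fun i => w (some i)) = w none) hopg hf.weaken

theorem DefinableFun.add (hf : DefinableFun Q f) (hg : DefinableFun Q g) :
    DefinableFun Q fun v => f v + g v :=
  comp₂ (DefinablePred.add 0 1 2) hf hg

theorem DefinableFun.sub (hf : DefinableFun Q f) (hg : DefinableFun Q g) :
    DefinableFun Q fun v => f v - g v :=
  comp₂ ((DefinablePred.add 2 1 0).congr fun _ => by rw [sub_eq_iff_eq_add, eq_comm]) hf hg

theorem DefinablePred.fun_eq (hf : DefinableFun Q f) (hg : DefinableFun Q g) :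
    DefinablePred Q fun v => f v = g v :=
  subst (P := fun v x => f v = x) hf hg

end Definability

/-! ### Multiplication on segments -/

/-- In units of `m`, the number `x` is a square. -/
def SquareMultiple (Q : Set (ℤ × ℤ × ℤ × ℤ)) (m x : ℤ) : Prop :=
  ∃ a, (m, a, a, x) ∈ Q

/-- In units of `m`, the number `x` is a sum of four squares. By Lagrange's theorem this is a
definable form of `x` being a natural number multiple of `m`. -/
def NatMultiple (Q : Set (ℤ × ℤ × ℤ × ℤ)) (m x : ℤ) : Prop :=
  ∃ a b c d, (SquareMultiple Q m a ∧ SquareMultiple Q m b ∧ SquareMultiple Q m c ∧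
    SquareMultiple Q m d) ∧ a + b + c + d = x

/-- In units of `m`, the number `x` lies between `0` and `N`. -/
def InSegment (Q : Set (ℤ × ℤ × ℤ × ℤ)) (m N x : ℤ) : Prop :=
  NatMultiple Q m x ∧ NatMultiple Q m (N - x)

/-- The elements satisfying `InSegment Q m N` are `0, m, …, N`, and `Q` contains all their products
in units of `m`; this is expressed by a first-order condition. -/
def IsSegment (Q : Set (ℤ × ℤ × ℤ × ℤ)) (m N : ℤ) : Prop :=
  m ≠ 0 ∧ InSegment Q m N 0 ∧ (∀ x, InSegment Q m N x → x = N ∨ InSegment Q m N (x + m)) ∧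
    ∀ x y, InSegment Q m N x → InSegment Q m N y → ∃ z, (m, x, y, z) ∈ Q

/-- The relation `Q` contains, in units of `m`, all products of two natural numbers up to `n`. -/
structure HasProducts (Q : Set (ℤ × ℤ × ℤ × ℤ)) (m : ℤ) (n : ℕ) : Prop where
  ne_zero : m ≠ 0
  mem : ∀ {i j : ℕ}, i ≤ n → j ≤ n → ((m, i * m, j * m, i * j * m) : ℤ × ℤ × ℤ × ℤ) ∈ Q

section Segments

variable {Q : Set (ℤ × ℤ × ℤ × ℤ)}

theorem DefinablePred.natMultiple {α : Type} {f g : (α → ℤ) → ℤ} (hf : DefinableFun Q f)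
    (hg : DefinableFun Q g) : DefinablePred Q fun v => NatMultiple Q (f v) (g v) := by
  have hsq : ∀ {β : Type} (i j : β), DefinablePred Q fun v => SquareMultiple Q (v i) (v j) :=
    fun _ _ => ex (mem _ _ _ _)
  have hvar : DefinablePred Q fun v : Fin 2 → ℤ => NatMultiple Q (v 0) (v 1) :=
    .ex <| .ex <| .ex <| .ex <| ((hsq _ _).and <| (hsq _ _).and <| (hsq _ _).and (hsq _ _)).and <|
      .fun_eq ((((DefinableFun.var _).add (.var _)).add (.var _)).add (.var _)) (.var _)
  have hvarg : DefinablePred Q fun w : Option α → ℤ =>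
      NatMultiple Q (w none) (g fun i => w (some i)) :=
    subst (P := fun w y => NatMultiple Q (w none) y) (hvar.relabel ![some none, none]) hg.weaken
  exact subst (P := fun v x => NatMultiple Q x (g v)) hvarg hf

theorem DefinablePred.inSegment {α : Type} {f g h : (α → ℤ) → ℤ} (hf : DefinableFun Q f)
    (hg : DefinableFun Q g) (hh : DefinableFun Q h) :
    DefinablePred Q fun v => InSegment Q (f v) (g v) (h v) :=
  (natMultiple hf hh).and (natMultiple hf (hg.sub hh))

theorem DefinablePred.isSegment {α : Type} (i j : α) :
    DefinablePred Q fun v => IsSegment Q (v i) (v j) := by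
  refine (fun_eq (.var _) .zero).not.and <| (inSegment (.var _) (.var _) .zero).and <| and ?_ ?_
  · exact all <| (inSegment (.var _) (.var _) (.var _)).imp <| (eq _ _).or <|
      inSegment (.var _) (.var _) (.add (.var _) (.var _))
  · exact all <| all <| (inSegment (.var _) (.var _) (.var _)).imp <|
      (inSegment (.var _) (.var _) (.var _)).imp <| ex <| mem _ _ _ _

theorem HasProducts.mono {m : ℤ} {k n : ℕ} (h : HasProducts Q m n) (hk : k ≤ n) :
    HasProducts Q m k :=
  ⟨h.ne_zero, fun hi hj => h.mem (hi.trans hk) (hj.trans hk)⟩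

theorem HasProducts.natMultiple {m : ℤ} {n : ℕ} (h : HasProducts Q m n) :
    NatMultiple Q m (n * m) := by
  obtain ⟨a, b, c, d, hn⟩ := Nat.sum_four_squares n
  have hsq : ∀ a : ℕ, a ^ 2 ≤ n → SquareMultiple Q m (a * a * m) := fun a ha =>
    have ha' : a ≤ n := (Nat.le_self_pow two_ne_zero a).trans ha
    ⟨a * m, h.mem ha' ha'⟩
  refine ⟨_, _, _, _, ⟨hsq a (by lia), hsq b (by lia), hsq c (by lia), hsq d (by lia)⟩, ?_⟩
  rw [← hn]
  push_cast
  ring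

theorem HasProducts.inSegment {m : ℤ} {i n : ℕ} (h : HasProducts Q m n) (hi : i ≤ n) :
    InSegment Q m (n * m) (i * m) := by
  refine ⟨(h.mono hi).natMultiple, ?_⟩
  rw [← sub_mul, ← Nat.cast_sub hi]
  exact (h.mono (Nat.sub_le n i)).natMultiple

theorem exists_hasProducts
    (hQ2 : ∀ F : Finset (ℤ × ℤ), ∃ m : ℤ, m ≠ 0 ∧
      ∀ p ∈ F, (m, p.1 * m, p.2 * m, p.1 * p.2 * m) ∈ Q) (n : ℕ) :
    ∃ m, HasProducts Q m n := by
  obtain ⟨m, hm, hF⟩ := hQ2 (Finset.Icc 0 (n : ℤ) ×ˢ Finset.Icc 0 (n : ℤ))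
  exact ⟨m, hm, fun {i j} hi hj => hF (i, j) (by simp [hi, hj])⟩

variable (hQ1 : ∀ x ∈ Q, ∃ k l m : ℤ, x = (m, k * m, l * m, k * l * m))
include hQ1

theorem eq_mul_of_mem {m i j z : ℤ} (hm : m ≠ 0) (h : (m, i * m, j * m, z) ∈ Q) :
    z = i * j * m := by
  obtain ⟨k, l, m', h⟩ := hQ1 _ h
  obtain ⟨rfl, hi, hj, rfl⟩ := by simpa only [Prod.mk.injEq] using h
  rw [mul_right_cancel₀ hm hi, mul_right_cancel₀ hm hj]

theorem exists_eq_mul_of_squareMultiple {m x : ℤ} (h : SquareMultiple Q m x) :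
    ∃ i : ℕ, x = i * m := by
  obtain ⟨a, ha⟩ := h
  obtain ⟨k, l, m', h⟩ := hQ1 _ ha
  obtain ⟨rfl, hk, hl, rfl⟩ := by simpa only [Prod.mk.injEq] using h
  rcases eq_or_ne m 0 with rfl | hm
  · exact ⟨0, by simp⟩
  · obtain rfl : k = l := mul_right_cancel₀ hm (hk.symm.trans hl)
    exact ⟨(k * k).toNat, by rw [Int.toNat_of_nonneg (mul_self_nonneg k)]⟩

theorem exists_eq_mul_of_natMultiple {m x : ℤ} (h : NatMultiple Q m x) :
    ∃ i : ℕ, x = i * m := by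
  obtain ⟨a, b, c, d, ⟨ha, hb, hc, hd⟩, rfl⟩ := h
  obtain ⟨i, rfl⟩ := exists_eq_mul_of_squareMultiple hQ1 ha
  obtain ⟨j, rfl⟩ := exists_eq_mul_of_squareMultiple hQ1 hb
  obtain ⟨k, rfl⟩ := exists_eq_mul_of_squareMultiple hQ1 hc
  obtain ⟨l, rfl⟩ := exists_eq_mul_of_squareMultiple hQ1 hd
  exact ⟨i + j + k + l, by push_cast; ring⟩

theorem exists_eq_mul_of_inSegment {m x : ℤ} {n : ℕ} (hm : m ≠ 0)
    (h : InSegment Q m (n * m) x) : ∃ i ≤ n, x = (i : ℤ) * m := by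
  obtain ⟨i, rfl⟩ := exists_eq_mul_of_natMultiple hQ1 h.1
  obtain ⟨j, hj⟩ := exists_eq_mul_of_natMultiple hQ1 h.2
  have hij : (n : ℤ) - i = j := mul_right_cancel₀ hm (by rw [sub_mul, hj])
  exact ⟨i, by lia, rfl⟩

theorem HasProducts.inSegment_iff {m x : ℤ} {n : ℕ} (h : HasProducts Q m n) :
    InSegment Q m (n * m) x ↔ ∃ i ≤ n, x = (i : ℤ) * m := by
  refine ⟨exists_eq_mul_of_inSegment hQ1 h.ne_zero, ?_⟩
  rintro ⟨i, hi, rfl⟩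
  exact h.inSegment hi

theorem HasProducts.isSegment {m : ℤ} {n : ℕ} (h : HasProducts Q m n) :
    IsSegment Q m (n * m) := by
  refine ⟨h.ne_zero, by simpa using h.inSegment n.zero_le, fun x hx => ?_, fun x y hx hy => ?_⟩
  · obtain ⟨i, hi, rfl⟩ := (h.inSegment_iff hQ1).1 hx
    rcases hi.eq_or_lt with rfl | hlt
    · exact .inl rfl
    · exact .inr (by simpa [add_mul] using h.inSegment hlt)
  · obtain ⟨i, hi, rfl⟩ := (h.inSegment_iff hQ1).1 hx
    obtain ⟨j, hj, rfl⟩ := (h.inSegment_iff hQ1).1 hy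
    exact ⟨_, h.mem hi hj⟩

theorem IsSegment.exists_hasProducts {m N : ℤ} (h : IsSegment Q m N) :
    ∃ n : ℕ, N = n * m ∧ HasProducts Q m n := by
  obtain ⟨hm, hzero, hsucc, hmul⟩ := h
  obtain ⟨n, rfl⟩ : ∃ n : ℕ, N = n * m := exists_eq_mul_of_natMultiple hQ1 (by simpa using hzero.2)
  have hseg : ∀ i : ℕ, i ≤ n → InSegment Q m (n * m) (i * m) := by
    intro i
    induction i with
    | zero => exact fun _ => by simpa using hzero
    | succ i ih =>
      intro hi
      rcases hsucc _ (ih (i.le_succ.trans hi)) with hin | hnext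
      · exact absurd (Nat.cast_injective (mul_right_cancel₀ hm hin)) (Nat.lt_of_succ_le hi).ne
      · simpa [add_mul] using hnext
  refine ⟨n, rfl, hm, fun {i j} hi hj => ?_⟩
  obtain ⟨z, hz⟩ := hmul _ _ (hseg i hi) (hseg j hj)
  exact eq_mul_of_mem hQ1 hm hz ▸ hz

end Segments

/-! ### Expressing `Σ₁` relations in segments -/

/-- The definable condition `E m N` on valuations with values in a segment `0, m, …, N` expresses,
in units of `m`, the relation `R`: it is sound in every segment and complete in all large ones. -/
structure Expresses (Q : Set (ℤ × ℤ × ℤ × ℤ)) {α : Type} (E : ℤ → ℤ → (α → ℤ) → Prop)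
    (R : (α → ℕ) → Prop) : Prop where
  definable : DefinablePred Q fun w : Option (Option α) → ℤ =>
    E (w none) (w (some none)) fun i => w (some (some i))
  sound {m : ℤ} {n : ℕ} {v : α → ℕ} : HasProducts Q m n → (∀ i, v i ≤ n) →
    E m (n * m) (fun i => v i * m) → R v
  complete {v : α → ℕ} : R v → ∀ᶠ n : ℕ in Filter.atTop, ∀ m, HasProducts Q m n →
    (∀ i, v i ≤ n) → E m (n * m) fun i => v i * m

section Expressibility

variable {Q : Set (ℤ × ℤ × ℤ × ℤ)} {α : Type}

theorem Expresses.eq (i j : α) : Expresses Q (fun _ _ x => x i = x j) fun v => v i = v j where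
  definable := .eq _ _
  sound h _ hij := Nat.cast_injective (mul_right_cancel₀ h.ne_zero hij)
  complete hij := .of_forall fun _ _ _ _ => by simp only [hij]

theorem Expresses.one (i : α) : Expresses Q (fun m _ x => x i = m) fun v => v i = 1 where
  definable := .eq _ _
  sound h _ hi := Nat.cast_eq_one.1 ((mul_eq_right₀ h.ne_zero).1 hi)
  complete hi := .of_forall fun _ _ _ _ => by simp only [hi, Nat.cast_one, one_mul]

theorem Expresses.add (i j k : α) :
    Expresses Q (fun _ _ x => x i + x j = x k) fun v => v i + v j = v k where
  definable := .add _ _ _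
  sound h _ hijk := by
    rw [← add_mul] at hijk
    exact_mod_cast mul_right_cancel₀ h.ne_zero hijk
  complete hijk := .of_forall fun _ _ _ _ => by simp only [← hijk, Nat.cast_add, add_mul]

theorem Expresses.mul (hQ1 : ∀ x ∈ Q, ∃ k l m : ℤ, x = (m, k * m, l * m, k * l * m))
    (i j k : α) :
    Expresses Q (fun m _ x => (m, x i, x j, x k) ∈ Q) fun v => v i * v j = v k where
  definable := .mem _ _ _ _
  sound h _ hijk := by
    exact_mod_cast (mul_right_cancel₀ h.ne_zero (eq_mul_of_mem hQ1 h.ne_zero hijk)).symm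
  complete hijk := .of_forall fun _ _ h hv => by
    simpa only [← hijk, Nat.cast_mul] using h.mem (hv i) (hv j)

section Connectives

variable {E E' : ℤ → ℤ → (α → ℤ) → Prop} {R R' : (α → ℕ) → Prop}

theorem Expresses.and (h : Expresses Q E R) (h' : Expresses Q E' R') :
    Expresses Q (fun m N x => E m N x ∧ E' m N x) fun v => R v ∧ R' v where
  definable := h.definable.and h'.definable
  sound hm hv := And.imp (h.sound hm hv) (h'.sound hm hv)
  complete hR := by
    filter_upwards [h.complete hR.1, h'.complete hR.2] with n hE hE' m hm hv
    exact ⟨hE m hm hv, hE' m hm hv⟩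

theorem Expresses.or (h : Expresses Q E R) (h' : Expresses Q E' R') :
    Expresses Q (fun m N x => E m N x ∨ E' m N x) fun v => R v ∨ R' v where
  definable := h.definable.or h'.definable
  sound hm hv := Or.imp (h.sound hm hv) (h'.sound hm hv)
  complete {v} := by
    rintro (hR | hR)
    · exact (h.complete hR).mono fun n hE m hm hv => .inl (hE m hm hv)
    · exact (h'.complete hR).mono fun n hE m hm hv => .inr (hE m hm hv)

end Connectives

theorem natCast_elim_mul (m : ℤ) (v : α → ℕ) (y : ℕ) :
    (fun o : Option α => ((o.elim y v : ℕ) : ℤ) * m) =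
      fun o => o.elim (y * m : ℤ) fun i => v i * m := by
  funext o
  cases o <;> rfl

section Quantifiers

variable {E : ℤ → ℤ → (Option α → ℤ) → Prop} {R : (α → ℕ) → ℕ → Prop}
  (h : Expresses Q E fun w => R (fun i => w (some i)) (w none))
include h

theorem Expresses.definable_elim :
    DefinablePred Q fun w : Option (Option (Option α)) → ℤ =>
      E (w (some none)) (w (some (some none)))
        fun o => o.elim (w none) fun i => w (some (some (some i))) := by
  refine (h.definable.relabel fun o : Option (Option (Option α)) =>
    o.elim (some none) fun o => o.elim (some (some none)) fun o =>
      o.elim none fun i => some (some (some i))).congr fun w => ?_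
  refine iff_of_eq (congrArg _ (funext fun o => ?_))
  cases o <;> rfl

theorem Expresses.sound_elim {m : ℤ} {n : ℕ} {v : α → ℕ} {y : ℕ} (hm : HasProducts Q m n)
    (hv : ∀ i, v i ≤ n) (hy : y ≤ n)
    (hE : E m (n * m) fun o => o.elim (y * m : ℤ) fun i => v i * m) : R v y :=
  h.sound (v := fun o => o.elim y v) hm (Option.forall.2 ⟨hy, hv⟩)
    (by rwa [natCast_elim_mul])

theorem Expresses.complete_elim {v : α → ℕ} {y : ℕ} (hR : R v y) :
    ∀ᶠ n : ℕ in Filter.atTop, ∀ m, HasProducts Q m n → (∀ i, v i ≤ n) → y ≤ n →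
      E m (n * m) fun o => o.elim (y * m : ℤ) fun i => v i * m := by
  filter_upwards [h.complete (v := fun o => o.elim y v) hR] with n hE m hm hv hy
  rw [← natCast_elim_mul]
  exact hE m hm (Option.forall.2 ⟨hy, hv⟩)

variable (hQ1 : ∀ x ∈ Q, ∃ k l m : ℤ, x = (m, k * m, l * m, k * l * m))
include hQ1

theorem Expresses.ex :
    Expresses Q (fun m N x => ∃ y, InSegment Q m N y ∧ E m N fun o => o.elim y x)
      fun v => ∃ y, R v y where
  definable := .ex ((DefinablePred.inSegment (.var _) (.var _) (.var _)).and h.definable_elim)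
  sound hm hv := by
    rintro ⟨y, hy, hE⟩
    obtain ⟨j, hj, rfl⟩ := (hm.inSegment_iff hQ1).1 hy
    exact ⟨j, h.sound_elim hm hv hj hE⟩
  complete {v} := by
    rintro ⟨y, hR⟩
    filter_upwards [h.complete_elim hR, Filter.eventually_ge_atTop y] with n hE hy m hm hv
    exact ⟨_, hm.inSegment hy, hE m hm hv hy⟩

theorem Expresses.ball (k : α) :
    Expresses Q
      (fun m N x => ∀ y, InSegment Q m (x k) y → y ≠ x k → E m N fun o => o.elim y x)
      fun v => ∀ y < v k, R v y where
  definable := .all <| (DefinablePred.inSegment (.var _) (.var _) (.var _)).imp <|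
    (DefinablePred.eq _ _).not.imp h.definable_elim
  sound {m n v} hm hv hE y hy := by
    have hne : (y * m : ℤ) ≠ v k * m := fun he =>
      hy.ne (Nat.cast_injective (mul_right_cancel₀ hm.ne_zero he))
    exact h.sound_elim hm hv (hy.le.trans (hv k))
      (hE _ ((hm.mono (hv k)).inSegment hy.le) hne)
  complete {v} hR := by
    have hall : ∀ᶠ n : ℕ in Filter.atTop, ∀ y ∈ Set.Iio (v k), ∀ m, HasProducts Q m n →
        (∀ i, v i ≤ n) → y ≤ n → E m (n * m) fun o => o.elim (y * m : ℤ) fun i => v i * m :=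
      (Filter.eventually_all_finite (Set.finite_Iio _)).2 fun y hy => h.complete_elim (hR y hy)
    filter_upwards [hall] with n hE m hm hv x hx hne
    obtain ⟨y, hy, rfl⟩ := ((hm.mono (hv k)).inSegment_iff hQ1).1 hx
    have hlt : y < v k := hy.lt_of_ne fun he => hne (by rw [he])
    exact hE y hlt m hm hv (hy.trans (hv k))

end Quantifiers

theorem exists_expresses_of_isSigmaOne
    (hQ1 : ∀ x ∈ Q, ∃ k l m : ℤ, x = (m, k * m, l * m, k * l * m))
    {R : (α → ℕ) → Prop} (hR : IsSigmaOne R) : ∃ E, Expresses Q E R := by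
  induction hR with
  | eq i j => exact ⟨_, .eq i j⟩
  | one i => exact ⟨_, .one i⟩
  | add i j k => exact ⟨_, .add i j k⟩
  | mul i j k => exact ⟨_, .mul hQ1 i j k⟩
  | and _ _ h h' => exact ⟨_, h.choose_spec.and h'.choose_spec⟩
  | or _ _ h h' => exact ⟨_, h.choose_spec.or h'.choose_spec⟩
  | ex _ h => exact ⟨_, h.choose_spec.ex hQ1⟩
  | ball k _ h => exact ⟨_, h.choose_spec.ball hQ1 k⟩

theorem exists_definablePred_of_isSigmaOne
    (hQ1 : ∀ x ∈ Q, ∃ k l m : ℤ, x = (m, k * m, l * m, k * l * m))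
    (hQ2 : ∀ F : Finset (ℤ × ℤ), ∃ m : ℤ, m ≠ 0 ∧
      ∀ p ∈ F, (m, p.1 * m, p.2 * m, p.1 * p.2 * m) ∈ Q)
    {R : ℕ → Prop} (hR : IsSigmaOne fun v : Unit → ℕ => R (v ())) :
    ∃ P : ℤ → ℤ → Prop, (DefinablePred Q fun v : Fin 2 → ℤ => P (v 0) (v 1)) ∧
      ∀ k : ℕ, R k ↔ ∃ m, P m (k * m) := by
  obtain ⟨E, hE⟩ := exists_expresses_of_isSigmaOne hQ1 hR
  refine ⟨fun m x => ∃ N, IsSegment Q m N ∧ InSegment Q m N x ∧ E m N fun _ => x,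
    .ex <| (DefinablePred.isSegment _ _).and <|
      (DefinablePred.inSegment (.var _) (.var _) (.var _)).and <|
        hE.definable.relabel fun o => o.elim (some 0) fun o => o.elim none fun _ => some 1,
    fun k => ⟨fun hk => ?_, ?_⟩⟩
  · obtain ⟨n, hn, hkn⟩ := ((hE.complete (v := fun _ => k) hk).and
      (Filter.eventually_ge_atTop k)).exists
    obtain ⟨m, hm⟩ := exists_hasProducts hQ2 n
    exact ⟨m, n * m, hm.isSegment hQ1, hm.inSegment hkn, hn m hm fun _ => hkn⟩
  · rintro ⟨m, N, hseg, hin, hEk⟩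
    obtain ⟨n, rfl, hm⟩ := hseg.exists_hasProducts hQ1
    obtain ⟨i, hi, hki⟩ := (hm.inSegment_iff hQ1).1 hin
    obtain rfl : k = i := Nat.cast_injective (mul_right_cancel₀ hm.ne_zero hki)
    exact hE.sound hm (v := fun _ => k) (fun _ => hi) hEk

end Expressibility

/-! ### The reduction -/

/-- The term `i + (i + ⋯ + i)` with `n + 1` occurrences of the variable `i`; there is no constant
for `0`, hence the shift. -/
def multipleTerm {α : Type} (i : α) : ℕ → L.Term α
  | 0 => .var i
  | n + 1 => addTerm (.var i) (multipleTerm i n)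

/-- The sentence `∃ m x, x + m = (n + 1) * m ∧ ψ`, written as `¬ ∀ m x, x + m = (n + 1) * m → ¬ ψ`
to have a short list of symbols in front of the term depending on `n`. -/
def multipleSentence (ψ : L.BoundedFormula Empty 2) (n : ℕ) : L.Sentence :=
  ∼ (∀' ∀' ((addTerm (.var (.inr 1)) (.var (.inr 0)) =' multipleTerm (.inr 0) n) ⟹ ∼ ψ))

section Encoding

theorem realize_addTerm (Q : Set (ℤ × ℤ × ℤ × ℤ)) {α : Type} (s t : L.Term α) (v : α → ℤ) :
    @Term.realize L ℤ (S Q) _ v (addTerm s t) =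
      @Term.realize L ℤ (S Q) _ v s + @Term.realize L ℤ (S Q) _ v t :=
  rfl

theorem realize_multipleTerm (Q : Set (ℤ × ℤ × ℤ × ℤ)) {α : Type} (i : α) (n : ℕ) (v : α → ℤ) :
    @Term.realize L ℤ (S Q) _ v (multipleTerm i n) = n * v i + v i := by
  let := S Q
  induction n with
  | zero => simp [multipleTerm]
  | succ n ih =>
    rw [multipleTerm, realize_addTerm, ih, Term.realize_var]
    push_cast
    ring

theorem realize_multipleSentence (Q : Set (ℤ × ℤ × ℤ × ℤ)) (ψ : L.BoundedFormula Empty 2)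
    (n : ℕ) :
    @Sentence.Realize L ℤ (S Q) (multipleSentence ψ n) ↔
      ∃ m : ℤ, @BoundedFormula.Realize L ℤ (S Q) _ _ ψ default ![m, n * m] := by
  let := S Q
  have hbody : ∀ (v : Empty → ℤ) (xs : Fin 0 → ℤ) (m x : ℤ), BoundedFormula.Realize
      ((addTerm (.var (.inr 1)) (.var (.inr 0)) =' multipleTerm (.inr 0) n) ⟹ ∼ ψ) v
      (Fin.snoc (Fin.snoc xs m) x) ↔ (x = n * m → ¬ ψ.Realize default ![m, x]) := by
    intro v xs m x
    have hsnoc : (Fin.snoc (Fin.snoc xs m) x : Fin 2 → ℤ) = ![m, x] := List.ofFn_inj.1 rfl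
    rw [BoundedFormula.realize_imp, BoundedFormula.realize_not, hsnoc, Subsingleton.elim v default]
    simp [realize_addTerm, realize_multipleTerm]
  refine (not_congr (forall₂_congr (hbody _ _))).trans ?_
  simp only [forall_eq, not_forall, not_not]

theorem DefinablePred.exists_realize_multipleSentence {Q : Set (ℤ × ℤ × ℤ × ℤ)}
    {P : ℤ → ℤ → Prop} (hP : DefinablePred Q fun v : Fin 2 → ℤ => P (v 0) (v 1)) :
    ∃ ψ, ∀ n : ℕ, @Sentence.Realize L ℤ (S Q) (multipleSentence ψ n) ↔ ∃ m, P m (n * m) := by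
  let := S Q
  obtain ⟨φ, hφ⟩ := definablePred_iff_exists_formula.1 hP
  refine ⟨BoundedFormula.relabel (n := 2) (k := 0) Sum.inr φ, fun n => ?_⟩
  refine (realize_multipleSentence Q _ n).trans (exists_congr fun m => ?_)
  exact (Formula.realize_relabel_sumInr φ).trans (hφ _)

theorem primrec_encode_append_cons {σ : Type} [Encodable σ] {a : ℕ → σ}
    (ha : Primrec fun n => Encodable.encode (a n)) (l₁ l₂ : List σ) :
    Primrec fun n => Encodable.encode (l₁ ++ a n :: l₂) := by
  induction l₁ with
  | nil =>
    simp only [List.nil_append, Encodable.encode_list_cons]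
    exact Primrec.succ.comp (Primrec₂.natPair.comp ha (.const _))
  | cons b l₁ ih =>
    simp only [List.cons_append, Encodable.encode_list_cons]
    exact Primrec.succ.comp (Primrec₂.natPair.comp (.const _) ih)

theorem primrec_encode_multipleTerm {α : Type} [Encodable α] (i : α) :
    Primrec fun n => Encodable.encode (multipleTerm i n) := by
  let plus : α ⊕ (Σ k, L.Functions k) := .inr ⟨2, ()⟩
  let consCode (c : ℕ) : ℕ :=
    (Nat.pair (Encodable.encode plus)
      (Nat.pair (Encodable.encode (.inl i : α ⊕ (Σ k, L.Functions k))) c).succ).succ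
  have hconsCode : Primrec consCode := Primrec.succ.comp <| Primrec₂.natPair.comp (.const _) <|
    Primrec.succ.comp <| Primrec₂.natPair.comp (.const _) .id
  have hlist : ∀ n, (multipleTerm i (n + 1)).listEncode =
      plus :: .inl i :: (multipleTerm i n).listEncode := fun n => by
    simp [multipleTerm, addTerm, Functions.apply₂, Term.listEncode, List.finRange_succ, plus]
  have hiterate : ∀ n, consCode^[n] (Encodable.encode (multipleTerm i 0)) =
      Encodable.encode (multipleTerm i n) := by
    intro n
    induction n with
    | zero => rfl
    | succ n ih =>
      have hcode : Encodable.encode (multipleTerm i (n + 1)) =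
          Encodable.encode (multipleTerm i (n + 1)).listEncode := rfl
      rw [Function.iterate_succ_apply', ih, hcode, hlist]
      rfl
  exact (Primrec.nat_iterate .id (.const _) (hconsCode.comp .snd).to₂).of_eq hiterate

theorem primrec_encode_multipleSentence (ψ : L.BoundedFormula Empty 2) :
    Primrec fun n => Encodable.encode (multipleSentence ψ n) := by
  let Symbol := (Σ k, L.Term (Empty ⊕ Fin k)) ⊕ ((Σ n, L.Relations n) ⊕ ℕ)
  let imp : Symbol := .inr (.inr 0)
  let all : Symbol := .inr (.inr 1)
  let sum : L.Term (Empty ⊕ Fin 2) := addTerm (.var (.inr 1)) (.var (.inr 0))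
  have hterm : Primrec fun n =>
      Encodable.encode (.inl ⟨2, multipleTerm (.inr 0) n⟩ : Symbol) :=
    Primrec.nat_mul.comp (.const 2)
      (Primrec₂.natPair.comp (.const 2) (primrec_encode_multipleTerm _))
  exact primrec_encode_append_cons hterm [imp, all, all, imp, .inl ⟨2, sum⟩]
    ((∼ ψ).listEncode ++ (BoundedFormula.falsum : L.BoundedFormula Empty 0).listEncode)

end Encoding

theorem encode_mem_theoryCodes (Q : Set (ℤ × ℤ × ℤ × ℤ)) (φ : L.Sentence) :
    Encodable.encode φ ∈ theoryCodes Q ↔ @Sentence.Realize L ℤ (S Q) φ := by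
  simp only [theoryCodes, Set.mem_ofPred_eq, Encodable.encode_inj, exists_eq_left]

theorem manyOneReducible_theoryCodes {Q : Set (ℤ × ℤ × ℤ × ℤ)}
    (hQ1 : ∀ x ∈ Q, ∃ k l m : ℤ, x = (m, k * m, l * m, k * l * m))
    (hQ2 : ∀ F : Finset (ℤ × ℤ), ∃ m : ℤ, m ≠ 0 ∧
      ∀ p ∈ F, (m, p.1 * m, p.2 * m, p.1 * p.2 * m) ∈ Q)
    {γ : Type*} [Primcodable γ] {p : γ → Prop} (hp : REPred p) :
    p ≤₀ fun c => c ∈ theoryCodes Q := by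
  obtain ⟨P, hP, hPp⟩ :=
    exists_definablePred_of_isSigmaOne (R := fun c => ∃ a ∈ Encodable.decode c, p a) hQ1 hQ2
      (isSigmaOne_of_rePred hp)
  obtain ⟨ψ, hψ⟩ := hP.exists_realize_multipleSentence
  refine ⟨fun a => Encodable.encode (multipleSentence ψ (Encodable.encode a)),
    ((primrec_encode_multipleSentence ψ).comp .encode).to_comp, fun a => ?_⟩
  calc p a ↔ ∃ b ∈ Encodable.decode (α := γ) (Encodable.encode a), p b := by simp
    _ ↔ ∃ m, P m (Encodable.encode a * m) := hPp _
    _ ↔ @Sentence.Realize L ℤ (S Q) (multipleSentence ψ (Encodable.encode a)) := (hψ _).symm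
    _ ↔ Encodable.encode (multipleSentence ψ (Encodable.encode a)) ∈ theoryCodes Q :=
      (encode_mem_theoryCodes Q _).symm

theorem undecidable (Q : Set (ℤ × ℤ × ℤ × ℤ))
    (hQ1 : ∀ x ∈ Q, ∃ k l m : ℤ, x = (m, k * m, l * m, k * l * m))
    (hQ2 : ∀ F : Finset (ℤ × ℤ), ∃ m : ℤ, m ≠ 0 ∧
      ∀ p ∈ F, (m, p.1 * m, p.2 * m, p.1 * p.2 * m) ∈ Q) :
    ¬ ComputablePred (fun c => c ∈ theoryCodes Q) := by
  intro hcomputable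
  have hreducible := manyOneReducible_theoryCodes hQ1 hQ2 (ComputablePred.halting_problem_re 0)
  exact ComputablePred.halting_problem 0
    (ComputablePred.computable_of_manyOneReducible hreducible hcomputable)

end Stmt3
end
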